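/- arXiv:2412.20797 — 5 statements merged into one kernel-verified Lean document; each statement's English description precedes it below -/
import Mathlib

section
/- Let A be a commutative ring, f(u) = Σ_{i=0}^n a_{2n-2i} u^{2i} monic in u², and B = SSplit_A(f) the signed splitting ring. If the discriminant Δ = 4^n η₁²⋯η_n² ∏_{i<j}(η_i²−η_j²)² of f (an element of A) is a unit of A, then the map A → B is étale (i.e., flat, of finite presentation, and unramified). -/
open MvPolynomial

noncomputable def esymmSq (A : Type*) [CommRing A] (n i : ℕ) : MvPolynomial (Fin n) A :=
  ∑ s ∈ Finset.powersetCard i (Finset.univ : Finset (Fin n)), ∏ j ∈ s, X j ^ 2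

noncomputable def ssplitIdeal (A : Type*) [CommRing A] (n : ℕ) (a : ℕ → A) :
    Ideal (MvPolynomial (Fin n) A) :=
  Ideal.span (Set.range fun i : Fin n =>
    C (a (2 * (i.1 + 1))) - (-1 : MvPolynomial (Fin n) A) ^ (i.1 + 1) * esymmSq A n (i.1 + 1))

/-- The signed splitting ring `SSplit_A(f) = A[η₁,…,η_n]/I`. -/
abbrev SSplit (A : Type*) [CommRing A] (n : ℕ) (a : ℕ → A) : Type _ :=
  MvPolynomial (Fin n) A ⧸ ssplitIdeal A n a

/-- The classes `η i` in the signed splitting ring. -/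
noncomputable def ssplitEta (A : Type*) [CommRing A] (n : ℕ) (a : ℕ → A) (i : Fin n) :
    SSplit A n a :=
  Ideal.Quotient.mk (ssplitIdeal A n a) (X i)

/-! Put `P = ∏ₖ (T - ηₖ²)`, with coefficients in `A[η₁,…,ηₙ]`. The `n` relations defining
`SSplit_A(f)` equate the coefficients of `P` with those of `f̃`, so by the Jacobian criterion it
suffices that the Jacobian determinant of the coefficients of `P` is a unit in the quotient.
Differentiating `P(ηₗ²) = 0` along `∂/∂ηᵢ` shows that the Jacobian matrix times the Vandermonde
matrix of the `ηₗ²` is diagonal, up to sign, with entries `2ηₗ P'(ηₗ²) = 2ηₗ ∏_{k≠l} (ηₗ² - ηₖ²)`;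
all of these divide a power of the discriminant. -/

section RootsAndCoefficients

open Polynomial in
lemma derivation_sum_coeff_mul_pow_of_isRoot {A R : Type*} [CommRing A] [CommRing R] [Algebra A R]
    (d : Derivation A R R) {p : R[X]} (hp : p.Monic) {x : R} (hx : p.IsRoot x) :
    ∑ j : Fin p.natDegree, d (p.coeff j) * x ^ (j : ℕ) = -(p.derivative.eval x * d x) := by
  have h_coeffs : PolynomialModule.eval x (d.mapCoeffs p) =
      ∑ j : Fin p.natDegree, d (p.coeff j) * x ^ (j : ℕ) := by
    conv_lhs => rw [p.as_sum_range, map_sum, map_sum, Finset.sum_range_succ, hp.coeff_natDegree]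
    simp [Finset.sum_range, mul_comm]
  have h_chain := d.apply_eval_eq x p
  rw [hx, map_zero, h_coeffs, smul_eq_mul] at h_chain
  exact eq_neg_of_add_eq_zero_left h_chain.symm

variable {A R : Type*} [CommRing A] [CommRing R] [Algebra A R] {n : ℕ}

open Lagrange (nodal)

lemma derivation_coeff_nodal_mul_vandermonde_transpose {ι : Type*} (d : ι → Derivation A R R)
    (x : Fin n → R) :
    (Matrix.of fun i (j : Fin n) => d i ((nodal Finset.univ x).coeff j)) *
        (Matrix.vandermonde x).transpose =
      -((Matrix.of fun i l => d i (x l)) *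
        Matrix.diagonal fun l => ∏ k ∈ Finset.univ.erase l, (x l - x k)) := by
  nontriviality R
  ext i l
  have h_degree : (nodal Finset.univ x).natDegree = n := by simp [Lagrange.natDegree_nodal]
  have h_diff := derivation_sum_coeff_mul_pow_of_isRoot (d i) Lagrange.nodal_monic
    (Lagrange.eval_nodal_at_node (v := x) (Finset.mem_univ l))
  rw [Lagrange.eval_nodal_derivative_eval_node_eq (Finset.mem_univ l), Lagrange.eval_nodal,
    h_degree] at h_diff
  rw [Matrix.neg_apply, Matrix.mul_diagonal, Matrix.of_apply, mul_comm (d i (x l)), ← h_diff]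
  rfl

lemma det_derivation_coeff_nodal_mul_det_vandermonde (d : Fin n → Derivation A R R)
    (x : Fin n → R) :
    (Matrix.of fun i j : Fin n => d i ((nodal Finset.univ x).coeff j)).det *
        (Matrix.vandermonde x).det =
      (-1) ^ n * ((Matrix.of fun i l => d i (x l)).det *
        ∏ l, ∏ k ∈ Finset.univ.erase l, (x l - x k)) := by
  rw [← Matrix.det_transpose (Matrix.vandermonde x), ← Matrix.det_mul,
    derivation_coeff_nodal_mul_vandermonde_transpose, Matrix.det_neg, Matrix.det_mul,
    Matrix.det_diagonal, Fintype.card_fin]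

end RootsAndCoefficients

lemma isUnit_sub_of_isUnit_prod_sq_sub {ι R : Type*} [CommRing R] [LinearOrder ι] [Fintype ι]
    {x : ι → R} (h : IsUnit (∏ p : ι × ι with p.1 < p.2, (x p.1 - x p.2) ^ 2)) {i j : ι}
    (hij : i ≠ j) : IsUnit (x i - x j) := by
  have h_lt {k l : ι} (hkl : k < l) : IsUnit (x k - x l) :=
    (isUnit_pow_iff two_ne_zero).1 (IsUnit.prod_iff.1 h (k, l) (by simpa using hkl))
  rcases hij.lt_or_gt with hij | hji
  · exact h_lt hij
  · simpa using (h_lt hji).neg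

theorem etale_quotient_span_range_of_isUnit_det {A σ : Type*} [CommRing A] [Fintype σ]
    [DecidableEq σ] {I : Ideal (MvPolynomial σ A)} {r : σ → MvPolynomial σ A}
    (hI : I = Ideal.span (Set.range r))
    (h : IsUnit (Ideal.Quotient.mk I (Matrix.of fun i j => pderiv i (r j)).det)) :
    Algebra.Etale A (MvPolynomial σ A ⧸ I) := by
  subst hI
  let P : Algebra.PreSubmersivePresentation A (MvPolynomial σ A ⧸ Ideal.span (Set.range r)) σ σ :=
    .naive id Function.injective_id
  have h_matrix : P.jacobiMatrix = Matrix.of fun i j => pderiv i (r j) := by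
    ext1 i j
    exact Algebra.PreSubmersivePresentation.jacobiMatrix_naive ..
  let Q : Algebra.SubmersivePresentation A (MvPolynomial σ A ⧸ Ideal.span (Set.range r)) σ σ :=
    { P with
      jacobian_isUnit := by
        rw [P.jacobian_eq_jacobiMatrix_det, h_matrix]
        exact h }
  rw [Algebra.Etale.iff_isStandardSmoothOfRelativeDimension_zero]
  exact Q.isStandardSmoothOfRelativeDimension (Nat.sub_self _)

section SignedSplittingRing

variable (A : Type*) [CommRing A] (n : ℕ) (a : ℕ → A)

/-- The polynomial `∏ₖ (T - ηₖ²)` in `T` over `A[η₁,…,ηₙ]`, which becomes `f̃(T)` over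
`SSplit_A(f)`. -/
noncomputable def sqNodal : Polynomial (MvPolynomial (Fin n) A) :=
  Lagrange.nodal Finset.univ fun k => X k ^ 2

/-- The discriminant `4ⁿ η₁²⋯ηₙ² ∏_{i<j} (ηᵢ² - ηⱼ²)²` of `f`, as an element of the signed
splitting ring. -/
noncomputable def ssplitDiscr : SSplit A n a :=
  4 ^ n * (∏ i, ssplitEta A n a i ^ 2) *
    ∏ p : Fin n × Fin n with p.1 < p.2, (ssplitEta A n a p.1 ^ 2 - ssplitEta A n a p.2 ^ 2) ^ 2

/-- The relation equating the coefficients of `T^j` in `f̃` and in `∏ₖ (T - ηₖ²)`. -/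
noncomputable def ssplitRelation (j : Fin n) : MvPolynomial (Fin n) A :=
  C (a (2 * (n - j))) - (sqNodal A n).coeff j

variable {A n} in
lemma coeff_sqNodal_sub {i : ℕ} (hi : i ≤ n) :
    (sqNodal A n).coeff (n - i) = (-1) ^ i * esymmSq A n i := by
  have h_vieta := Multiset.prod_X_sub_C_coeff
    (Finset.univ.val.map fun k : Fin n => (X k : MvPolynomial (Fin n) A) ^ 2) (k := n - i) (by simp)
  rw [Multiset.map_map, Finset.esymm_map_val, Multiset.card_map, Finset.card_val, Finset.card_fin,
    Nat.sub_sub_self hi] at h_vieta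
  exact h_vieta

lemma ssplitIdeal_eq_span_range_ssplitRelation :
    ssplitIdeal A n a = Ideal.span (Set.range (ssplitRelation A n a)) := by
  rw [ssplitIdeal, ← Fin.rev_surjective.range_comp (ssplitRelation A n a)]
  congr! with i
  have hi : i.1 + 1 ≤ n := i.2
  simp [ssplitRelation, Fin.val_rev, coeff_sqNodal_sub hi, Nat.sub_sub_self hi]

lemma det_pderiv_X_sq :
    (Matrix.of fun i l : Fin n => pderiv i (X l ^ 2 : MvPolynomial (Fin n) A)).det =
      2 ^ n * ∏ l, X l := by
  have h_diagonal : (Matrix.of fun i l : Fin n => pderiv i (X l ^ 2 : MvPolynomial (Fin n) A)) =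
      Matrix.diagonal fun l => 2 * X l := by
    ext1 i l
    rcases eq_or_ne i l with rfl | hil
    · simp [Derivation.leibniz_pow]
    · simp [Derivation.leibniz_pow, hil]
  rw [h_diagonal, Matrix.det_diagonal, Finset.prod_mul_distrib, Finset.prod_const,
    Finset.card_fin]

lemma det_pderiv_ssplitRelation_mul_det_vandermonde :
    (Matrix.of fun i j => pderiv i (ssplitRelation A n a j)).det *
        (Matrix.vandermonde fun l : Fin n => (X l : MvPolynomial (Fin n) A) ^ 2).det =
      2 ^ n * (∏ l, X l) * ∏ l, ∏ k ∈ Finset.univ.erase l, (X l ^ 2 - X k ^ 2) := by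
  have h_neg : (Matrix.of fun i j => pderiv i (ssplitRelation A n a j)) =
      -Matrix.of fun i j : Fin n => pderiv i ((sqNodal A n).coeff j) := by
    ext1 i j
    simp [ssplitRelation]
  rw [h_neg, Matrix.det_neg, Fintype.card_fin, mul_assoc, sqNodal,
    det_derivation_coeff_nodal_mul_det_vandermonde, ← mul_assoc, ← mul_pow, neg_one_mul, neg_neg,
    one_pow, one_mul, det_pderiv_X_sq]

variable {A n a}

lemma isUnit_two_pow_mul_prod_ssplitEta (h : IsUnit (ssplitDiscr A n a)) :
    IsUnit (2 ^ n * ∏ i, ssplitEta A n a i) := by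
  refine (isUnit_pow_iff two_ne_zero).1 ?_
  convert isUnit_of_mul_isUnit_left h using 1
  rw [mul_pow, ← pow_mul, mul_comm n 2, pow_mul, Finset.prod_pow]
  norm_num

lemma isUnit_ssplitEta_sq_sub_sq (h : IsUnit (ssplitDiscr A n a)) {i j : Fin n} (hij : i ≠ j) :
    IsUnit (ssplitEta A n a i ^ 2 - ssplitEta A n a j ^ 2) :=
  isUnit_sub_of_isUnit_prod_sq_sub (x := fun i => ssplitEta A n a i ^ 2)
    (isUnit_of_mul_isUnit_right h) hij

theorem ssplit_etale_of_discriminant_unit_general (h : IsUnit (ssplitDiscr A n a)) :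
    Algebra.Etale A (SSplit A n a) := by
  refine etale_quotient_span_range_of_isUnit_det (ssplitIdeal_eq_span_range_ssplitRelation A n a) ?_
  refine isUnit_of_mul_isUnit_left (y := Ideal.Quotient.mk (ssplitIdeal A n a)
    (Matrix.vandermonde fun l : Fin n => X l ^ 2).det) ?_
  have h_differences : IsUnit (∏ l, ∏ k ∈ Finset.univ.erase l,
      (ssplitEta A n a l ^ 2 - ssplitEta A n a k ^ 2)) :=
    IsUnit.prod_iff.2 fun l _ => IsUnit.prod_iff.2 fun k hk =>
      isUnit_ssplitEta_sq_sub_sq h (Finset.ne_of_mem_erase hk).symm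
  rw [← map_mul, det_pderiv_ssplitRelation_mul_det_vandermonde]
  simpa only [ssplitEta, map_mul, map_pow, map_prod, map_sub, map_ofNat] using
    (isUnit_two_pow_mul_prod_ssplitEta h).mul h_differences

end SignedSplittingRing

/-- If the discriminant `Δ = 4^n η₁²⋯η_n² ∏_{i<j} (η_i² - η_j²)²` of `f` (an element of `A`)
is a unit of `A`, then `A → SSplit_A(f)` is étale, i.e. flat, of finite presentation and
(formally) unramified. -/
theorem ssplit_etale_of_discriminant_unit (A : Type*) [CommRing A] [IsNoetherianRing A]
    (n : ℕ) (a : ℕ → A) (ha : a 0 = 1) (Δ : A)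
    (hΔ : algebraMap A (SSplit A n a) Δ =
      4 ^ n * (∏ i : Fin n, ssplitEta A n a i ^ 2) *
        ∏ p ∈ Finset.univ.filter (fun p : Fin n × Fin n => p.1 < p.2),
          (ssplitEta A n a p.1 ^ 2 - ssplitEta A n a p.2 ^ 2) ^ 2)
    (hunit : IsUnit Δ) :
    Module.Flat A (SSplit A n a) ∧ Algebra.FinitePresentation A (SSplit A n a) ∧
      Algebra.FormallyUnramified A (SSplit A n a) := by
  have hdiscr : algebraMap A (SSplit A n a) Δ = ssplitDiscr A n a := hΔ
  have := ssplit_etale_of_discriminant_unit_general (hdiscr ▸ hunit.map (algebraMap A _))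
  exact ⟨inferInstance, inferInstance, inferInstance⟩
end

section
/- Let A be a noetherian reduced commutative ring, f monic in u² of degree 2n over A, and B its signed splitting ring. If the discriminant Δ of f is a non-zerodivisor in A, then B is reduced. -/
open MvPolynomial

/-! Write `f(u) = h(u²)`, so that `h = ∏ (T - ηᵢ²)` over `B`. Once `η₁, …, ηₖ` are adjoined, `h`
loses the `k` linear factors `T - ηᵢ²`, so `ηₖ₊₁` satisfies a monic equation of degree `2(n - k)`;
hence `2ⁿ n!` elements span `B` over `A`. At a minimal prime `P` of `A` the discriminant does not
vanish, so over an algebraic closure of `κ(P)` the `2ⁿ n!` signed permutations of the square roots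
of the roots of `h` give pairwise distinct points of `B`. By Dedekind's independence of characters
these points determine, modulo `P`, all the coordinates of an element of `B` with respect to the
spanning family. They vanish on nilpotents, whose coordinates therefore lie in every minimal prime
of `A`, and so are zero. -/

section SpanningFamily

open Polynomial hiding X C map_map
open scoped Pointwise

theorem mem_lifts_of_monic_mul_mem_lifts {R S : Type*} [CommRing R] [CommRing S] {φ : R →+* S}
    {p q : S[X]} (hq : q.Monic) (hqφ : q ∈ lifts φ) (hpq : q * p ∈ lifts φ) : p ∈ lifts φ := by
  obtain ⟨q', hq', -, hq'monic⟩ := lifts_and_natDegree_eq_and_monic hqφ hq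
  obtain ⟨f, hf⟩ := (mem_lifts _).1 hpq
  refine (mem_lifts _).2 ⟨f /ₘ q', ?_⟩
  rw [map_divByMonic φ hq'monic, hf, hq', mul_divByMonic_cancel_left p hq]

variable {A B : Type*} [CommRing A] [CommRing B] [Algebra A B]

theorem prod_X_sub_C_compl_mem_lifts {ι : Type*} [Fintype ι] [DecidableEq ι] {h : A[X]}
    {y : ι → B} (hy : h.map (algebraMap A B) = ∏ i, (Polynomial.X - Polynomial.C (y i)))
    {V : Subalgebra A B} {s : Finset ι} (hs : ∀ i ∈ s, y i ∈ V) :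
    ∏ i ∈ sᶜ, (Polynomial.X - Polynomial.C (y i)) ∈ lifts (algebraMap V B) := by
  refine mem_lifts_of_monic_mul_mem_lifts (monic_prod_X_sub_C y s)
    (prod_mem fun i hi => (mem_lifts _).2 ⟨Polynomial.X - Polynomial.C ⟨y i, hs i hi⟩, by simp⟩)
    ((mem_lifts _).2 ⟨h.map (algebraMap A V), ?_⟩)
  rw [Polynomial.map_map, ← IsScalarTower.algebraMap_eq, hy, Finset.prod_mul_prod_compl]

theorem exists_span_eq_adjoin_singleton {V : Subalgebra A B} {t : Finset B}
    (ht : Submodule.span A (t : Set B) = Subalgebra.toSubmodule V) {x : B} {g : V[X]}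
    (hg : g.Monic) (hx : aeval x g = 0) :
    ∃ t' : Finset B, t'.card ≤ t.card * g.natDegree ∧ Submodule.span A (t' : Set B) =
      Subalgebra.toSubmodule ((Algebra.adjoin V {x}).restrictScalars A) := by
  classical
  let powers : Finset B := (Finset.range g.natDegree).image (x ^ ·)
  have powers_card : powers.card ≤ g.natDegree := Finset.card_image_le.trans (by simp)
  have coe_mul_eq_smul : (V : Set B) * powers = (Set.univ : Set V) • (powers : Set B) := by
    ext
    simp [Set.mem_mul, Set.mem_smul, Subalgebra.smul_def]
  refine ⟨t * powers, Finset.card_mul_le.trans (Nat.mul_le_mul_left _ powers_card), ?_⟩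
  calc Submodule.span A ((t * powers : Finset B) : Set B)
      = Submodule.span A (V : Set B) * Submodule.span A (powers : Set B) := by
        rw [Finset.coe_mul, ← Submodule.span_mul_span, ht, ← Subalgebra.coe_toSubmodule,
          Submodule.span_eq]
    _ = (Submodule.span V (powers : Set B)).restrictScalars A := by
        rw [Submodule.span_mul_span, coe_mul_eq_smul,
          Submodule.span_smul_of_span_eq_top Submodule.span_univ]
    _ = _ := by
        rw [Submodule.span_range_natDegree_eq_adjoin hg hx]
        rfl

theorem exists_span_eq_adjoin_of_map_eq_prod {ι : Type*} [Fintype ι] {h : A[X]} {x : ι → B}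
    {m : ℕ} (hm : m ≠ 0)
    (hx : h.map (algebraMap A B) = ∏ i, (Polynomial.X - Polynomial.C (x i ^ m))) (s : Finset ι) :
    ∃ t : Finset B, t.card ≤ m ^ s.card * (Fintype.card ι).descFactorial s.card ∧
      Submodule.span A (t : Set B) = Subalgebra.toSubmodule (Algebra.adjoin A (x '' s)) := by
  classical
  induction s using Finset.induction_on with
  | empty => exact ⟨{1}, by simp, by simp [Algebra.toSubmodule_bot, Submodule.one_eq_span]⟩
  | insert j s hj ih =>
    obtain ⟨t, ht_card, ht_span⟩ := ih
    obtain ⟨g, hg_map, hg_deg, hg_monic⟩ := lifts_and_natDegree_eq_and_monic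
      (prod_X_sub_C_compl_mem_lifts hx fun i hi =>
        pow_mem (Algebra.subset_adjoin (Set.mem_image_of_mem x hi)) m)
      (monic_prod_X_sub_C (fun i => x i ^ m) sᶜ)
    have hg_root : aeval (x j) (expand _ m g) = 0 := by
      rw [expand_aeval, ← eval_map_algebraMap, hg_map, Polynomial.eval_prod]
      exact Finset.prod_eq_zero (Finset.mem_compl.2 hj) (by simp)
    have hg_deg_le : g.natDegree ≤ Fintype.card ι - s.card := by
      rw [hg_deg, ← Finset.card_compl]
      refine (natDegree_prod_le _ _).trans ?_
      simpa using Finset.sum_le_card_nsmul sᶜ _ 1 fun i _ => natDegree_X_sub_C_le (x i ^ m)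
    obtain ⟨t', ht'_card, ht'_span⟩ :=
      exists_span_eq_adjoin_singleton ht_span (hg_monic.expand (Nat.pos_of_ne_zero hm)) hg_root
    refine ⟨t', ?_, by
      rw [ht'_span, ← Algebra.adjoin_union_eq_adjoin_adjoin, Set.union_singleton,
        Finset.coe_insert, Set.image_insert_eq]⟩
    calc t'.card ≤ t.card * (g.natDegree * m) := by rwa [natDegree_expand] at ht'_card
      _ ≤ m ^ s.card * (Fintype.card ι).descFactorial s.card *
          ((Fintype.card ι - s.card) * m) := by gcongr
      _ = _ := by rw [Finset.card_insert_of_notMem hj, Nat.descFactorial_succ]; ring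

end SpanningFamily

section PointCount

variable {A B : Type*} [CommRing A] [CommRing B] [Algebra A B]
  {κ ι : Type*} {b : κ → B}

theorem linearIndependent_algHom_comp_of_span_eq_top {K : Type*} [Field K] [Algebra A K]
    (hb : Submodule.span A (Set.range b) = ⊤) {χ : ι → B →ₐ[A] K} (hχ : Function.Injective χ) :
    LinearIndependent K fun i k => χ i (b k) := by
  let restrict : (B →ₗ[A] K) →ₗ[K] κ → K :=
    { toFun := fun f k => f (b k), map_add' := fun _ _ => rfl, map_smul' := fun _ _ => rfl }
  have restrict_ker : LinearMap.ker restrict = ⊥ :=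
    LinearMap.ker_eq_bot.2 fun _ _ h => LinearMap.ext_on_range hb (congrFun h)
  exact ((linearIndependent_algHom_toLinearMap A B K).comp χ hχ).map' restrict restrict_ker

variable [Fintype κ] [Fintype ι]

theorem algebraMap_coeff_eq_zero_of_card_le {K : Type*} [Field K] [Algebra A K]
    (hb : Submodule.span A (Set.range b) = ⊤) {χ : ι → B →ₐ[A] K} (hχ : Function.Injective χ)
    (hcard : Fintype.card κ ≤ Fintype.card ι) {c : κ → A} (hc : ∀ i, χ i (∑ k, c k • b k) = 0)
    (k : κ) : algebraMap A K (c k) = 0 := by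
  classical
  have hli := linearIndependent_algHom_comp_of_span_eq_top hb hχ
  have hcard_eq : Fintype.card ι = Module.finrank K (κ → K) :=
    hli.fintype_card_le_finrank.antisymm (by simpa using hcard)
  have hdot : Fintype.linearCombination K (fun k => algebraMap A K (c k)) = 0 :=
    LinearMap.ext_on_range (hli.span_eq_top_of_card_eq_finrank' hcard_eq) fun i => by
      simpa [Fintype.linearCombination_apply, Algebra.smul_def, mul_comm] using hc i
  simpa using LinearMap.congr_fun hdot (Pi.single k 1)

theorem isReduced_of_card_le_algHom {S : Type*} {K : S → Type*} [∀ s, Field (K s)]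
    [∀ s, Algebra A (K s)] (hK : ∀ x : A, (∀ s, algebraMap A (K s) x = 0) → x = 0)
    (hb : Submodule.span A (Set.range b) = ⊤) (hcard : Fintype.card κ ≤ Fintype.card ι)
    (hχ : ∀ s, ∃ χ : ι → B →ₐ[A] K s, Function.Injective χ) : IsReduced B := by
  refine ⟨fun x hx => ?_⟩
  obtain ⟨c, rfl⟩ := (Submodule.mem_span_range_iff_exists_fun A).1 (hb ▸ Submodule.mem_top (x := x))
  have hc (k : κ) : c k = 0 := hK _ fun s => by
    obtain ⟨χ, hχ⟩ := hχ s
    exact algebraMap_coeff_eq_zero_of_card_le hb hχ hcard (fun i => (hx.map (χ i)).eq_zero) k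
  simp [hc]

end PointCount

theorem eq_zero_of_forall_mem_minimalPrimes {R : Type*} [CommRing R] [IsReduced R] {x : R}
    (hx : ∀ P ∈ minimalPrimes R, x ∈ P) : x = 0 := by
  have h : x ∈ sInf (minimalPrimes R) := Submodule.mem_sInf.2 hx
  rw [minimalPrimes, Ideal.sInf_minimalPrimes] at h
  exact IsNilpotent.eq_zero h

/-- The discriminant `4ⁿ c₁² ⋯ cₙ² ∏_{i<j} (cᵢ² - cⱼ²)²` of `∏ (u² - cᵢ²)` (up to sign),
as a function of the square roots `cᵢ` of the roots in `u²`. -/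
def signedDiscr {R : Type*} [CommRing R] {n : ℕ} (c : Fin n → R) : R :=
  4 ^ n * (∏ i, c i ^ 2) *
    ∏ p ∈ Finset.univ.filter (fun p : Fin n × Fin n => p.1 < p.2), (c p.1 ^ 2 - c p.2 ^ 2) ^ 2

section SignedPermutations

variable {R : Type*} [CommRing R] {n : ℕ} {c : Fin n → R}

theorem map_signedDiscr {S F : Type*} [CommRing S] [FunLike F R S] [RingHomClass F R S] (φ : F)
    (c : Fin n → R) : φ (signedDiscr c) = signedDiscr (φ ∘ c) := by
  simp only [signedDiscr, map_mul, map_pow, map_prod, map_sub, map_ofNat, Function.comp_apply]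

theorem two_mul_ne_zero_of_signedDiscr_ne_zero (hc : signedDiscr c ≠ 0) (i : Fin n) :
    2 * c i ≠ 0 := by
  have hprod : ∏ j, (2 * c j) ^ 2 = 4 ^ n * ∏ j, c j ^ 2 := by
    simp only [mul_pow, Finset.prod_mul_distrib, Finset.prod_const, Finset.card_univ,
      Fintype.card_fin]
    norm_num
  intro hi
  refine hc ?_
  rw [signedDiscr, ← hprod, Finset.prod_eq_zero (Finset.mem_univ i) (by simp [hi]), zero_mul]

theorem sq_injective_of_signedDiscr_ne_zero (hc : signedDiscr c ≠ 0) :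
    Function.Injective fun i => c i ^ 2 := by
  intro i j h
  by_contra! hne
  wlog hij : i < j generalizing i j
  · exact this h.symm hne.symm (hne.lt_or_gt.resolve_left hij)
  refine hc ?_
  rw [signedDiscr, Finset.prod_eq_zero (i := (i, j)) (by simpa using hij)
    (by simp [show c i ^ 2 = c j ^ 2 from h]), mul_zero]

theorem units_int_smul_sq (ε : ℤˣ) (x : R) : (ε • x) ^ 2 = x ^ 2 := by
  rw [smul_pow, Int.units_sq, one_smul]

theorem signedPerm_injective {ι : Type*} {c : ι → R} (hc : ∀ i, 2 * c i ≠ 0)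
    (hsq : Function.Injective fun i => c i ^ 2) :
    Function.Injective fun (g : Equiv.Perm ι × (ι → ℤˣ)) i => g.2 i • c (g.1 i) := by
  rintro ⟨σ, ε⟩ ⟨τ, δ⟩ h
  have hval (i : ι) : ε i • c (σ i) = δ i • c (τ i) := congrFun h i
  obtain rfl : σ = τ := Equiv.ext fun i => hsq <|
    calc c (σ i) ^ 2 = (ε i • c (σ i)) ^ 2 := (units_int_smul_sq _ _).symm
      _ = (δ i • c (τ i)) ^ 2 := by rw [hval i]
      _ = c (τ i) ^ 2 := units_int_smul_sq _ _
  have neg_ne (i : ι) : -c i ≠ c i := fun h => hc i (by linear_combination -h)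
  obtain rfl : ε = δ := funext fun i => by
    have := hval i
    rcases Int.units_eq_one_or (ε i) with hε | hε <;>
      rcases Int.units_eq_one_or (δ i) with hδ | hδ <;>
      simp_all [(neg_ne (σ i)).symm]
  rfl

end SignedPermutations

/-- The monic polynomial `h` of degree `n` with `f(u) = h(u²)`: the coefficient of `Tⁱ` is
`a (2 * (n - i))` for `i < n`, and the leading coefficient is `1` whatever the value of `a 0`. -/
noncomputable def ssplitContract (A : Type*) [CommRing A] (n : ℕ) (a : ℕ → A) : Polynomial A :=
  (Polynomial.freeMonic A n).map (eval fun i => a (2 * (n - i.1)))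

section Contract

variable {A R : Type*} [CommRing A] [CommRing R] {n : ℕ} {a : ℕ → A}

theorem coeff_ssplitContract (i : Fin n) :
    (ssplitContract A n a).coeff (n - (i.1 + 1)) = a (2 * (i.1 + 1)) := by
  have hlt : n - (i.1 + 1) < n := by omega
  have hsub : n - (n - (i.1 + 1)) = i.1 + 1 := by omega
  simp [ssplitContract, Polynomial.coeff_freeMonic, hlt, hsub]

theorem monic_ssplitContract : (ssplitContract A n a).Monic :=
  (Polynomial.monic_freeMonic A n).map _

theorem natDegree_ssplitContract [Nontrivial A] : (ssplitContract A n a).natDegree = n := by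
  rw [ssplitContract, (Polynomial.monic_freeMonic A n).natDegree_map,
    Polynomial.natDegree_freeMonic]

theorem coeff_prod_X_sub_C_eq_esymm (d : Fin n → R) (i : Fin n) :
    (∏ j, (Polynomial.X - Polynomial.C (d j))).coeff (n - (i.1 + 1)) =
      (-1) ^ (i.1 + 1) * (Finset.univ.val.map d).esymm (i.1 + 1) := by
  have h := Multiset.prod_X_sub_C_coeff (Finset.univ.val.map d) (k := n - (i.1 + 1)) (by simp)
  have hsub : n - (n - (i.1 + 1)) = i.1 + 1 := by omega
  simp only [Multiset.map_map, Multiset.card_map, Finset.card_val, Finset.card_univ,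
    Fintype.card_fin, hsub] at h
  exact h

theorem map_ssplitContract_eq_prod_iff (φ : A →+* R) (d : Fin n → R) :
    (ssplitContract A n a).map φ = ∏ j, (Polynomial.X - Polynomial.C (d j)) ↔
      ∀ i : Fin n, φ (a (2 * (i.1 + 1))) =
        (-1) ^ (i.1 + 1) * (Finset.univ.val.map d).esymm (i.1 + 1) := by
  simp only [← coeff_ssplitContract, ← coeff_prod_X_sub_C_eq_esymm, ← Polynomial.coeff_map]
  refine ⟨fun h i => by rw [h], fun h => ?_⟩
  nontriviality R
  have := φ.domain_nontrivial
  have hp_deg : ((ssplitContract A n a).map φ).natDegree = n := by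
    rw [monic_ssplitContract.natDegree_map, natDegree_ssplitContract]
  have hq_deg : (∏ j, (Polynomial.X - Polynomial.C (d j))).natDegree = n := by simp
  refine (Polynomial.ext_iff_natDegree_le hp_deg.le hq_deg.le).2 fun m hm => ?_
  obtain hm_eq | hlt := hm.eq_or_lt
  · have hp_lead := (monic_ssplitContract.map φ).coeff_natDegree (p := (ssplitContract A n a).map φ)
    have hq_lead := (Polynomial.monic_prod_X_sub_C d Finset.univ).coeff_natDegree
    rw [hp_deg] at hp_lead
    rw [hq_deg] at hq_lead
    rw [hm_eq, hp_lead, hq_lead]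
  · obtain ⟨i, rfl⟩ : ∃ i : Fin n, m = n - (i.1 + 1) :=
      ⟨⟨n - 1 - m, by omega⟩, by dsimp only; omega⟩
    exact h i

theorem aeval_esymmSq [Algebra A R] (c : Fin n → R) (k : ℕ) :
    aeval c (esymmSq A n k) = (Finset.univ.val.map fun i => c i ^ 2).esymm k := by
  simp only [esymmSq, Finset.esymm_map_val, map_sum, map_prod, map_pow, aeval_X]

end Contract

theorem exists_eq_prod_X_sub_C_sq {K : Type*} [Field K] [IsAlgClosed K] {p : Polynomial K}
    (hp : p.Monic) {n : ℕ} (hn : p.natDegree = n) :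
    ∃ c : Fin n → K, p = ∏ i, (Polynomial.X - Polynomial.C (c i ^ 2)) := by
  obtain ⟨r, hr⟩ : ∃ r : List K, (r : Multiset K) = p.roots := ⟨_, p.roots.coe_toList⟩
  choose sqrt hsqrt using fun x : K => IsAlgClosed.exists_pow_nat_eq x two_pos
  have hsplits := IsAlgClosed.splits p
  obtain rfl : n = r.length := by
    rw [← hn, hsplits.natDegree_eq_card_roots, ← hr, Multiset.coe_card]
  refine ⟨fun i => sqrt r[i.1], ?_⟩
  simp only [hsqrt, Fin.prod_univ_fun_getElem r fun x => Polynomial.X - Polynomial.C x]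
  rw [← Multiset.prod_coe, ← Multiset.map_coe, hr]
  exact hsplits.eq_prod_roots_of_monic hp

namespace SSplit

variable {A R : Type*} [CommRing A] [CommRing R] {n : ℕ} {a : ℕ → A}

theorem mkₐ_eq_aeval_eta : Ideal.Quotient.mkₐ A (ssplitIdeal A n a) = aeval (ssplitEta A n a) :=
  algHom_ext fun i => (aeval_X (ssplitEta A n a) i).symm

theorem map_ssplitContract_eq_prod_eta : (ssplitContract A n a).map (algebraMap A (SSplit A n a)) =
    ∏ i, (Polynomial.X - Polynomial.C (ssplitEta A n a i ^ 2)) := by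
  refine (map_ssplitContract_eq_prod_iff _ _).2 fun i => ?_
  have hrel : aeval (R := A) (ssplitEta A n a) (C (a (2 * (i.1 + 1))) -
      (-1) ^ (i.1 + 1) * esymmSq A n (i.1 + 1)) = 0 := by
    rw [← mkₐ_eq_aeval_eta]
    exact Ideal.Quotient.eq_zero_iff_mem.2 (Ideal.subset_span ⟨i, rfl⟩)
  rw [← aeval_esymmSq (A := A) (ssplitEta A n a), ← sub_eq_zero, ← hrel]
  simp only [map_sub, map_mul, map_pow, map_neg, map_one, aeval_C]

/-- The homomorphism `ηᵢ ↦ cᵢ` from the signed splitting ring attached to a factorization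
`∏ (T - cᵢ²)` of `ssplitContract A n a` over an `A`-algebra. -/
noncomputable def lift [Algebra A R] (c : Fin n → R) (hc : (ssplitContract A n a).map
    (algebraMap A R) = ∏ i, (Polynomial.X - Polynomial.C (c i ^ 2))) : SSplit A n a →ₐ[A] R :=
  Ideal.Quotient.liftₐ _ (aeval c) fun p hp => by
    have hker : ssplitIdeal A n a ≤ RingHom.ker (aeval (R := A) c) := by
      refine Ideal.span_le.2 ?_
      rintro _ ⟨i, rfl⟩
      simp [aeval_esymmSq, (map_ssplitContract_eq_prod_iff _ _).1 hc i]
    exact hker hp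

@[simp]
theorem lift_eta [Algebra A R] {c : Fin n → R} (hc : (ssplitContract A n a).map
    (algebraMap A R) = ∏ i, (Polynomial.X - Polynomial.C (c i ^ 2))) (i : Fin n) :
    lift c hc (ssplitEta A n a i) = c i :=
  aeval_X c i

theorem adjoin_range_eta : Algebra.adjoin A (Set.range (ssplitEta A n a)) = ⊤ := by
  rw [Algebra.adjoin_range_eq_range_aeval, ← mkₐ_eq_aeval_eta, AlgHom.range_eq_top]
  exact Ideal.Quotient.mkₐ_surjective A _

theorem exists_span_eq_top :
    ∃ t : Finset (SSplit A n a), t.card ≤ 2 ^ n * n.factorial ∧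
      Submodule.span A (t : Set (SSplit A n a)) = ⊤ := by
  have h := exists_span_eq_adjoin_of_map_eq_prod two_ne_zero
    (map_ssplitContract_eq_prod_eta (A := A) (n := n) (a := a)) Finset.univ
  simpa [Set.image_univ, adjoin_range_eta, Nat.descFactorial_self] using h

theorem exists_signedPerm_algHom_injective {K : Type*} [Field K] [IsAlgClosed K] [Algebra A K]
    {Δ : A} (hΔ : algebraMap A (SSplit A n a) Δ = signedDiscr (ssplitEta A n a))
    (hΔK : algebraMap A K Δ ≠ 0) :
    ∃ χ : Equiv.Perm (Fin n) × (Fin n → ℤˣ) → SSplit A n a →ₐ[A] K, Function.Injective χ := by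
  have := (algebraMap A K).domain_nontrivial
  obtain ⟨c, hc⟩ := exists_eq_prod_X_sub_C_sq
    ((monic_ssplitContract (n := n) (a := a)).map (algebraMap A K))
    (by rw [monic_ssplitContract.natDegree_map, natDegree_ssplitContract])
  have hdiscr : signedDiscr c ≠ 0 := by
    have hΔc := congrArg (lift c hc) hΔ
    rw [AlgHom.commutes, map_signedDiscr] at hΔc
    simpa [hΔc, Function.comp_def] using hΔK
  have hperm (g : Equiv.Perm (Fin n) × (Fin n → ℤˣ)) :
      (ssplitContract A n a).map (algebraMap A K) =
        ∏ i, (Polynomial.X - Polynomial.C ((g.2 i • c (g.1 i)) ^ 2)) := by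
    simp only [units_int_smul_sq]
    rw [hc, Equiv.prod_comp g.1 fun i => Polynomial.X - Polynomial.C (c i ^ 2)]
  refine ⟨fun g => lift _ (hperm g), fun g g' hgg' => ?_⟩
  refine signedPerm_injective (two_mul_ne_zero_of_signedDiscr_ne_zero hdiscr)
    (sq_injective_of_signedDiscr_ne_zero hdiscr) (funext fun i => ?_)
  simpa using DFunLike.congr_fun hgg' (ssplitEta A n a i)

end SSplit

theorem ssplit_reduced_general (A : Type*) [CommRing A] [IsReduced A] (n : ℕ) (a : ℕ → A) (Δ : A)
    (hΔ : algebraMap A (SSplit A n a) Δ = signedDiscr (ssplitEta A n a))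
    (hreg : Δ ∈ nonZeroDivisors A) : IsReduced (SSplit A n a) := by
  obtain ⟨t, ht_card, ht_span⟩ := SSplit.exists_span_eq_top (A := A) (n := n) (a := a)
  have hprime (P : minimalPrimes A) : P.1.IsPrime := P.2.1.1
  have hker (P : minimalPrimes A) (x : A) :
      algebraMap A (AlgebraicClosure P.1.ResidueField) x = 0 ↔ x ∈ P.1 := by
    rw [IsScalarTower.algebraMap_apply A P.1.ResidueField, map_eq_zero,
      Ideal.algebraMap_residueField_eq_zero]
  refine isReduced_of_card_le_algHom (b := ((↑) : t → SSplit A n a))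
    (ι := Equiv.Perm (Fin n) × (Fin n → ℤˣ))
    (K := fun P : minimalPrimes A => AlgebraicClosure P.1.ResidueField)
    (fun x hx => eq_zero_of_forall_mem_minimalPrimes fun P hP => (hker ⟨P, hP⟩ x).1 (hx ⟨P, hP⟩))
    (by simpa using ht_span) ?_ fun P => ?_
  · simpa [Fintype.card_perm, Fintype.card_units_int, mul_comm] using ht_card
  · refine SSplit.exists_signedPerm_algHom_injective hΔ fun h => ?_
    exact Set.disjoint_left.1 (Ideal.disjoint_nonZeroDivisors_of_mem_minimalPrimes P.2)
      ((hker P Δ).1 h) hreg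

/-- If `A` is a noetherian reduced ring and the discriminant `Δ` of `f`
(the element of `A` which equals `4^n η₁²⋯η_n² ∏_{i<j}(η_i²-η_j²)²` in `B`) is a
non-zerodivisor, then the signed splitting ring `B = SSplit_A(f)` is reduced. -/
theorem ssplit_reduced (A : Type*) [CommRing A] [IsNoetherianRing A] [IsReduced A]
    (n : ℕ) (a : ℕ → A) (ha : a 0 = 1) (Δ : A)
    (hΔ : algebraMap A (SSplit A n a) Δ =
      4 ^ n * (∏ i : Fin n, ssplitEta A n a i ^ 2) *
        ∏ p ∈ Finset.univ.filter (fun p : Fin n × Fin n => p.1 < p.2),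
          (ssplitEta A n a p.1 ^ 2 - ssplitEta A n a p.2 ^ 2) ^ 2)
    (hreg : Δ ∈ nonZeroDivisors A) :
    IsReduced (SSplit A n a) :=
  ssplit_reduced_general A n a Δ hΔ hreg
end

section
/- Let A be a commutative ring with 2 and n! invertible, and B = SSplit_A(f) the signed splitting ring of a monic polynomial f in u² of degree 2n. Then B is free of rank one as a module over the group algebra A[W_n], where W_n = S_n ⋉ (ℤ/2)^n is the hyperoctahedral group acting by permuting the η_i and flipping their signs. -/
open MvPolynomial

/-- The permutation action of `S_n` on sign vectors, used to build the hyperoctahedral group. -/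
def permSignAction (n : ℕ) : Equiv.Perm (Fin n) →* MulAut (Fin n → ℤˣ) :=
  MonoidHom.mk' (fun σ => MulEquiv.arrowCongr σ (MulEquiv.refl ℤˣ))
    (by intro σ τ; ext v i; rfl)

/-- The hyperoctahedral group `W_n = S_n ⋉ (ℤ/2)^n`. -/
abbrev Hyperoct (n : ℕ) := (Fin n → ℤˣ) ⋊[permSignAction n] Equiv.Perm (Fin n)

/-!
When `n!` is invertible, the polynomial ring in `n` variables is spanned over the symmetric
polynomials by the `S_n`-conjugates of a single polynomial `g`. Indeed the points `(0, …, n - 1)`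
and their rearrangements are separated by units, so evaluation at them is onto `A ^ n!`, and it
turns the `n!` staircase monomials, which span over the symmetric polynomials, into a basis. The
section sending this basis back to the monomials inverts evaluation up to terms of lower degree;
averaging it over `S_n` makes it equivariant, and `g` is `n!` times the value of the average at an
indicator function.

In `B`, symmetric polynomials in the `η_i ^ 2` are constants, so the conjugates of `g(η ^ 2)` span
`A[η_1 ^ 2, …, η_n ^ 2]`. Since `2` is invertible, signed sums of the `∏ i, (1 ± η_i)` recover
every square-free monomial in the `η_i`, so the orbit of `b = g(η ^ 2) * ∏ i, (1 + η_i)` under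
`W_n` spans `B`.

Finally `B` maps onto an explicit free `A`-algebra of rank `2 ^ n * n! = |W_n|`, so the surjection
`A[W_n] → B`, `w ↦ w • b`, is followed by a surjection between free modules of equal finite rank,
which is bijective.
-/

universe u

section MonicFactors

variable {A : Type u} [CommRing A]

theorem nontrivial_adjoinRoot {f : Polynomial A} (hf : f.Monic) (hd : f.natDegree ≠ 0) :
    Nontrivial (AdjoinRoot f) := by
  refine Ideal.Quotient.nontrivial_iff.2 fun h => hd ?_
  rw [hf.isUnit_iff.1 (Ideal.span_singleton_eq_top.1 h), Polynomial.natDegree_one]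

theorem exists_monic_map_eq_X_sub_C_mul {S : Type*} [CommRing S] [Algebra A S] [Nontrivial S]
    {f : Polynomial A} {n : ℕ} (hf : f.Monic) (hd : f.natDegree = n + 1) {x : S}
    (hx : Polynomial.aeval x f = 0) :
    ∃ g : Polynomial S, g.Monic ∧ g.natDegree = n ∧
      f.map (algebraMap A S) = (Polynomial.X - Polynomial.C x) * g := by
  obtain ⟨g, hg⟩ : Polynomial.X - Polynomial.C x ∣ f.map (algebraMap A S) := by
    rwa [Polynomial.dvd_iff_isRoot, Polynomial.IsRoot, Polynomial.eval_map_algebraMap]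
  have hgm : g.Monic :=
    (Polynomial.monic_X_sub_C x).of_mul_monic_left (hg ▸ hf.map (algebraMap A S))
  refine ⟨g, hgm, ?_, hg⟩
  have hdeg := congrArg Polynomial.natDegree hg
  rw [hf.natDegree_map, hd, (Polynomial.monic_X_sub_C x).natDegree_mul hgm,
    Polynomial.natDegree_X_sub_C] at hdeg
  omega

theorem span_range_pow_adjoin_singleton {D : Type*} [CommRing D] [Algebra A D] {f : Polynomial A}
    {n : ℕ} (hf : f.Monic) (hd : f.natDegree = n) {x : D} (hx : Polynomial.aeval x f = 0) :
    Submodule.span A (Set.range fun k : Fin n =>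
      (⟨x, Algebra.self_mem_adjoin_singleton A x⟩ : Algebra.adjoin A {x}) ^ (k : ℕ)) = ⊤ := by
  set x' : Algebra.adjoin A {x} := ⟨x, Algebra.self_mem_adjoin_singleton A x⟩
  have hx' : Polynomial.aeval x' f = 0 := Subtype.ext (by rwa [Polynomial.aeval_subalgebra_coe])
  have hpre : (Subtype.val ⁻¹' {x} : Set (Algebra.adjoin A {x})) = {x'} := by
    ext z
    simp [x', Subtype.ext_iff]
  have h := Submodule.span_range_natDegree_eq_adjoin hf hx'
  rw [hd, ← hpre, Algebra.adjoin_adjoin_coe_preimage, Algebra.top_toSubmodule] at h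
  rw [← h]
  congr 1
  ext z
  simp [Fin.exists_iff]

end MonicFactors

section Staircase

theorem range_eq_singleton_union {α : Type*} {n : ℕ} (x : Fin (n + 1) → α) :
    Set.range x = {x (Fin.last n)} ∪ Set.range (x ∘ Fin.castSucc) := by
  ext z
  simp [Fin.exists_fin_succ', or_comm, eq_comm]

/-- The staircase monomial `∏ i, x i ^ j i`, whose `i`-th exponent is at most `i` when the
indices start at `0`; these are Artin's monomials. -/
def staircaseMonomial {D : Type*} [CommMonoid D] {n : ℕ} (x : Fin n → D)
    (j : (i : Fin n) → Fin (i.1 + 1)) : D :=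
  ∏ i, x i ^ (j i : ℕ)

theorem staircaseMonomial_snoc {D : Type*} [CommMonoid D] {n : ℕ} (x : Fin (n + 1) → D)
    (j : (i : Fin n) → Fin (i.1 + 1)) (k : Fin (n + 1)) :
    staircaseMonomial x (Fin.snoc (α := fun i : Fin (n + 1) => Fin (i.1 + 1)) j k) =
      x (Fin.last n) ^ (k : ℕ) * staircaseMonomial (x ∘ Fin.castSucc) j := by
  simp [staircaseMonomial, Fin.prod_univ_castSucc, mul_comm]

theorem card_staircaseExponents (n : ℕ) :
    Fintype.card ((i : Fin n) → Fin (i.1 + 1)) = n.factorial := by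
  rw [Fintype.card_pi]
  simp_rw [Fintype.card_fin]
  rw [Fin.prod_univ_eq_prod_range (· + 1), Finset.prod_range_add_one_eq_factorial]

/-- Splitting off the last root leaves a monic polynomial over the ring that root generates, and
the powers of the root below the degree span that ring. -/
theorem span_range_staircaseMonomial {n : ℕ} {A D : Type u} [CommRing A] [CommRing D]
    [Algebra A D] {f : Polynomial A} (hf : f.Monic) (hd : f.natDegree = n) {x : Fin n → D}
    (hx : f.map (algebraMap A D) = ∏ i, (Polynomial.X - Polynomial.C (x i)))
    (hgen : Algebra.adjoin A (Set.range x) = ⊤) :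
    Submodule.span A (Set.range (staircaseMonomial x)) = ⊤ := by
  induction n generalizing A with
  | zero =>
    rw [Set.range_eq_empty, Algebra.adjoin_empty] at hgen
    rw [← Algebra.top_toSubmodule, ← hgen, Algebra.toSubmodule_bot, Submodule.one_eq_span,
      Set.range_unique]
    simp [staircaseMonomial]
  | succ n ih =>
    nontriviality D
    set r := x (Fin.last n) with hr
    have hroot : Polynomial.aeval r f = 0 := by
      rw [← Polynomial.eval_map_algebraMap, hx, Polynomial.eval_prod]
      exact Finset.prod_eq_zero (Finset.mem_univ (Fin.last n)) (by simp [hr])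
    set S := Algebra.adjoin A {r}
    let r' : S := ⟨r, Algebra.self_mem_adjoin_singleton A r⟩
    have hroot' : Polynomial.aeval r' f = 0 :=
      Subtype.ext (by rwa [Polynomial.aeval_subalgebra_coe])
    obtain ⟨g, hg, hgd, hfg⟩ := exists_monic_map_eq_X_sub_C_mul hf hd hroot'
    have hgx : g.map (algebraMap S D) =
        ∏ i : Fin n, (Polynomial.X - Polynomial.C ((x ∘ Fin.castSucc) i)) := by
      have h := congrArg (Polynomial.map (algebraMap S D)) hfg
      rw [Polynomial.map_map, ← IsScalarTower.algebraMap_eq, hx, Fin.prod_univ_castSucc,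
        mul_comm, Polynomial.map_mul, Polynomial.map_sub, Polynomial.map_X, Polynomial.map_C] at h
      exact ((Polynomial.monic_X_sub_C r).isRegular.left h).symm
    have hgen' : Algebra.adjoin S (Set.range (x ∘ Fin.castSucc)) = ⊤ := by
      rw [range_eq_singleton_union, Algebra.adjoin_union_eq_adjoin_adjoin] at hgen
      exact Subalgebra.restrictScalars_injective A
        (hgen.trans (Subalgebra.restrictScalars_top A).symm)
    have hspan := Submodule.span_smul_of_span_eq_top (span_range_pow_adjoin_singleton hf hd hroot)
      (Set.range (staircaseMonomial (x ∘ Fin.castSucc)))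
    rw [ih hg hgd hgx hgen', Submodule.restrictScalars_top] at hspan
    rw [eq_top_iff, ← hspan]
    apply Submodule.span_mono
    rintro _ ⟨_, ⟨k, rfl⟩, _, ⟨j, rfl⟩, rfl⟩
    exact ⟨_, staircaseMonomial_snoc x j k⟩

end Staircase

section SymmetricSpan

variable {A : Type u} [CommRing A]

theorem coeff_prod_X_sub_C_X_mem_symmetricSubalgebra {σ : Type*} [Fintype σ] (k : ℕ) :
    (∏ i : σ, (Polynomial.X - Polynomial.C (X i : MvPolynomial σ A))).coeff k ∈
      symmetricSubalgebra σ A := by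
  intro e
  have h : (∏ i : σ, (Polynomial.X - Polynomial.C (X i : MvPolynomial σ A))).map
      (rename e : MvPolynomial σ A →ₐ[A] MvPolynomial σ A).toRingHom =
        ∏ i : σ, (Polynomial.X - Polynomial.C (X i)) := by
    rw [Polynomial.map_prod, ← Equiv.prod_comp e fun i => Polynomial.X - Polynomial.C (X i)]
    simp
  exact (Polynomial.coeff_map _ k).symm.trans (congrArg (Polynomial.coeff · k) h)

theorem exists_monic_map_eq_prod_X_sub_C_X [Nontrivial A] (σ : Type*) [Fintype σ] :
    ∃ f : Polynomial (symmetricSubalgebra σ A), f.Monic ∧ f.natDegree = Fintype.card σ ∧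
      f.map (algebraMap _ (MvPolynomial σ A)) =
        ∏ i : σ, (Polynomial.X - Polynomial.C (X i : MvPolynomial σ A)) := by
  have hlifts : ∏ i : σ, (Polynomial.X - Polynomial.C (X i : MvPolynomial σ A)) ∈
      Polynomial.lifts (algebraMap (symmetricSubalgebra σ A) (MvPolynomial σ A)) :=
    (Polynomial.lifts_iff_coeff_lifts _).2 fun k =>
      ⟨⟨_, coeff_prod_X_sub_C_X_mem_symmetricSubalgebra k⟩, rfl⟩
  obtain ⟨f, hmap, hdeg, hf⟩ := Polynomial.lifts_and_natDegree_eq_and_monic hlifts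
    (Polynomial.monic_prod_X_sub_C _ _)
  refine ⟨f, hf, ?_, hmap⟩
  rw [hdeg, Polynomial.natDegree_finsetProd_X_sub_C_eq_card, Finset.card_univ]

theorem span_symmetricSubalgebra_range_staircaseMonomial (n : ℕ) :
    Submodule.span (symmetricSubalgebra (Fin n) A)
      (Set.range (staircaseMonomial (X : Fin n → MvPolynomial (Fin n) A))) = ⊤ := by
  rcases subsingleton_or_nontrivial A with hA | hA
  · exact Subsingleton.elim _ _
  obtain ⟨f, hf, hd, hmap⟩ := exists_monic_map_eq_prod_X_sub_C_X (A := A) (Fin n)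
  refine span_range_staircaseMonomial hf (hd.trans (Fintype.card_fin n)) hmap ?_
  rw [← Algebra.adjoin_adjoin_of_tower A, adjoin_range_X, Algebra.coe_top, Algebra.adjoin_univ]

theorem isHomogeneous_staircaseMonomial {n : ℕ} (j : (i : Fin n) → Fin (i.1 + 1)) :
    (staircaseMonomial (X : Fin n → MvPolynomial (Fin n) A) j).IsHomogeneous (∑ i, (j i : ℕ)) :=
  IsHomogeneous.prod _ _ _ fun i _ => isHomogeneous_X_pow i _

theorem homogeneousComponent_mul_of_isHomogeneous {σ : Type*} (p : MvPolynomial σ A)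
    {m : MvPolynomial σ A} {k : ℕ} (hm : m.IsHomogeneous k) (d : ℕ) :
    homogeneousComponent d (p * m) =
      if k ≤ d then homogeneousComponent (d - k) p * m else 0 := by
  classical
  let _ : GradedAlgebra (homogeneousSubmodule σ A) := gradedAlgebra
  simp only [← decomposition.decompose'_apply]
  exact DirectSum.coe_decompose_mul_of_right_mem (homogeneousSubmodule σ A) d hm

theorem isSymmetric_homogeneousComponent {σ : Type*} {p : MvPolynomial σ A}
    (hp : p.IsSymmetric) (d : ℕ) : (homogeneousComponent d p).IsSymmetric := fun e => by
  rw [rename_homogeneousComponent, hp e]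

theorem exists_eq_sum_smul_staircaseMonomial {n d : ℕ} {p : MvPolynomial (Fin n) A}
    (hp : p.IsHomogeneous d) :
    ∃ s : ((i : Fin n) → Fin (i.1 + 1)) → symmetricSubalgebra (Fin n) A,
      p = ∑ j, s j • staircaseMonomial X j ∧
      ∀ j, ∑ i, (j i : ℕ) < d ∨ ∃ c, s j = algebraMap A _ c := by
  obtain ⟨s, hs⟩ := (Submodule.mem_span_range_iff_exists_fun _).1
    ((span_symmetricSubalgebra_range_staircaseMonomial (A := A) n).symm ▸
      Submodule.mem_top (x := p))
  have hsymm (j) : homogeneousComponent (d - ∑ i, (j i : ℕ)) (s j : MvPolynomial (Fin n) A) ∈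
      symmetricSubalgebra (Fin n) A :=
    isSymmetric_homogeneousComponent ((mem_symmetricSubalgebra _).1 (s j).2) _
  refine ⟨fun j => if ∑ i, (j i : ℕ) ≤ d then ⟨_, hsymm j⟩ else 0, ?_, fun j => ?_⟩
  · rw [← homogeneousComponent_eq_self hp, ← hs, map_sum]
    refine Finset.sum_congr rfl fun j _ => ?_
    rw [Subalgebra.smul_def, smul_eq_mul,
      homogeneousComponent_mul_of_isHomogeneous _ (isHomogeneous_staircaseMonomial j), ite_smul,
      zero_smul]
    rfl
  · rcases lt_trichotomy (∑ i, (j i : ℕ)) d with h | h | h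
    · exact Or.inl h
    · refine Or.inr ⟨coeff 0 (s j : MvPolynomial (Fin n) A), Subtype.ext ?_⟩
      simp [h]
    · exact Or.inr ⟨0, by simp [h.not_ge]⟩

end SymmetricSpan

section PermEvaluation

variable {A : Type u} [CommRing A]

/-- Evaluation of a polynomial at all rearrangements `y ∘ σ` of a point `y`: the restriction to
the fibre, over the point with roots `y`, of the map taking roots to coefficients. -/
noncomputable def evalPerm {ι : Type*} (y : ι → A) :
    MvPolynomial ι A →ₐ[A] (Equiv.Perm ι → A) :=
  AlgHom.pi fun σ => aeval (y ∘ σ)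

theorem evalPerm_rename {ι : Type*} (y : ι → A) (p : MvPolynomial ι A) (σ τ : Equiv.Perm ι) :
    evalPerm y (rename τ p) σ = evalPerm y p (σ * τ) :=
  aeval_rename _ _ _

theorem evalPerm_symmetricSubalgebra {ι : Type*} (y : ι → A) (s : symmetricSubalgebra ι A) :
    evalPerm y s = algebraMap A _ (aeval y (s : MvPolynomial ι A)) := by
  ext σ
  have h := evalPerm_rename y s 1 σ
  rw [s.2 σ] at h
  exact h.symm

theorem evalPerm_surjective {ι : Type*} [Finite ι] {y : ι → A}
    (hy : Pairwise fun i k => IsUnit (y i - y k)) : Function.Surjective (evalPerm y) := by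
  classical
  have := Fintype.ofFinite ι
  suffices h : ∀ σ : Equiv.Perm ι, Pi.single σ 1 ∈ LinearMap.range (evalPerm y).toLinearMap by
    refine LinearMap.range_eq_top (f := (evalPerm y).toLinearMap).1 (eq_top_iff.2 ?_)
    rw [← (Pi.basisFun A (Equiv.Perm ι)).span_eq, Submodule.span_le]
    rintro _ ⟨σ, rfl⟩
    simpa using h σ
  refine fun σ => ⟨∏ i, ∏ k ∈ Finset.univ.erase (σ i),
    C (Ring.inverse (y (σ i) - y k)) * (X i - C (y k)), funext fun τ => ?_⟩
  have hval : evalPerm y (∏ i, ∏ k ∈ Finset.univ.erase (σ i),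
      C (Ring.inverse (y (σ i) - y k)) * (X i - C (y k))) τ =
        ∏ i, ∏ k ∈ Finset.univ.erase (σ i), Ring.inverse (y (σ i) - y k) * (y (τ i) - y k) := by
    simp [evalPerm]
  refine hval.trans ?_
  rcases eq_or_ne τ σ with rfl | hτ
  · rw [Pi.single_eq_same]
    exact Finset.prod_eq_one fun i _ => Finset.prod_eq_one fun k hk =>
      Ring.inverse_mul_cancel _ (hy (Finset.ne_of_mem_erase hk).symm)
  · obtain ⟨i, hi⟩ := DFunLike.ne_iff.1 hτ
    rw [Pi.single_eq_of_ne hτ]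
    exact Finset.prod_eq_zero (Finset.mem_univ i)
      (Finset.prod_eq_zero (Finset.mem_erase.2 ⟨hi, Finset.mem_univ _⟩) (by simp))

theorem isUnit_natCast_sub_natCast {n : ℕ} (hn : IsUnit (n.factorial : A)) :
    Pairwise fun i k : Fin n => IsUnit ((i : A) - (k : A)) := by
  have hlt : ∀ i k : Fin n, i < k → IsUnit ((k : A) - (i : A)) := fun i k h => by
    rw [← Nat.cast_sub (Fin.le_def.1 h.le)]
    exact isUnit_of_dvd_unit (Nat.cast_dvd_cast (Nat.dvd_factorial (by omega) (by omega))) hn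
  intro i k hik
  rcases hik.lt_or_gt with h | h
  · exact neg_sub (k : A) (i : A) ▸ (hlt i k h).neg
  · exact hlt k i h

variable {n : ℕ} {y : Fin n → A}

theorem evalPerm_sum_smul_staircaseMonomial
    (s : ((i : Fin n) → Fin (i.1 + 1)) → symmetricSubalgebra (Fin n) A) :
    evalPerm y (∑ j, s j • staircaseMonomial X j) =
      ∑ j, aeval y (s j : MvPolynomial (Fin n) A) • evalPerm y (staircaseMonomial X j) := by
  rw [map_sum]
  refine Finset.sum_congr rfl fun j _ => ?_
  rw [Subalgebra.smul_def, smul_eq_mul, map_mul, evalPerm_symmetricSubalgebra, Algebra.smul_def]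

/-- The `n!` values span a free module of rank `n!`, so they form a basis. -/
theorem exists_apply_evalPerm_staircaseMonomial
    (hy : Pairwise fun i k => IsUnit (y i - y k)) :
    ∃ ψ : (Equiv.Perm (Fin n) → A) →ₗ[A] MvPolynomial (Fin n) A,
      ∀ j, ψ (evalPerm y (staircaseMonomial X j)) = staircaseMonomial X j := by
  rcases subsingleton_or_nontrivial A with hA | hA
  · exact ⟨0, fun j => Subsingleton.elim _ _⟩
  have hspan : ⊤ ≤ Submodule.span A (Set.range fun j => evalPerm y (staircaseMonomial X j)) := by
    intro z _
    obtain ⟨p, rfl⟩ := evalPerm_surjective hy z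
    obtain ⟨s, rfl⟩ := (Submodule.mem_span_range_iff_exists_fun _).1
      ((span_symmetricSubalgebra_range_staircaseMonomial (A := A) n).symm ▸
        Submodule.mem_top (x := p))
    rw [evalPerm_sum_smul_staircaseMonomial]
    exact (Submodule.mem_span_range_iff_exists_fun A).2 ⟨_, rfl⟩
  have hcard : Fintype.card ((i : Fin n) → Fin (i.1 + 1)) =
      Module.finrank A (Equiv.Perm (Fin n) → A) := by
    rw [card_staircaseExponents, Module.finrank_pi, Fintype.card_perm, Fintype.card_fin]
  let b := basisOfTopLeSpanOfCardEqFinrank _ hspan hcard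
  refine ⟨b.constr A (staircaseMonomial X), fun j => ?_⟩
  have hb : b j = evalPerm y (staircaseMonomial X j) := by simp [b]
  rw [← hb, b.constr_basis]

variable {ψ : (Equiv.Perm (Fin n) → A) →ₗ[A] MvPolynomial (Fin n) A}

/-- The coefficients of the staircase monomials of degree `d` are constants, which evaluation
does not change. -/
theorem apply_evalPerm_sub_mem {N : Submodule (symmetricSubalgebra (Fin n) A)
    (MvPolynomial (Fin n) A)}
    (hψ : ∀ j, ψ (evalPerm y (staircaseMonomial X j)) = staircaseMonomial X j)
    {d : ℕ} (hN : ∀ k < d, ∀ q : MvPolynomial (Fin n) A, q.IsHomogeneous k → q ∈ N)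
    {p : MvPolynomial (Fin n) A} (hp : p.IsHomogeneous d) : ψ (evalPerm y p) - p ∈ N := by
  obtain ⟨s, rfl, hs⟩ := exists_eq_sum_smul_staircaseMonomial hp
  rw [evalPerm_sum_smul_staircaseMonomial, map_sum, ← Finset.sum_sub_distrib]
  refine Submodule.sum_mem _ fun j _ => ?_
  rw [map_smul, hψ]
  rcases hs j with hj | ⟨c, hc⟩
  · have hmem := hN _ hj _ (isHomogeneous_staircaseMonomial j)
    exact N.sub_mem (N.smul_of_tower_mem _ hmem) (N.smul_mem _ hmem)
  · simp [hc]

theorem sum_rename_apply_evalPerm_rename_inv (y : Fin n → A)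
    (ψ : (Equiv.Perm (Fin n) → A) →ₗ[A] MvPolynomial (Fin n) A) (p : MvPolynomial (Fin n) A) :
    ∑ τ : Equiv.Perm (Fin n), rename τ (ψ (evalPerm y (rename ⇑τ⁻¹ p))) =
      ∑ κ : Equiv.Perm (Fin n), evalPerm y p κ •
        rename ⇑κ⁻¹ (∑ μ : Equiv.Perm (Fin n), rename μ (ψ (Pi.single μ 1))) := by
  have hexpand (τ : Equiv.Perm (Fin n)) : evalPerm y (rename ⇑τ⁻¹ p) =
      ∑ μ, evalPerm y p (μ * τ⁻¹) • Pi.single μ 1 := by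
    rw [← Finset.univ_sum_single (evalPerm y (rename ⇑τ⁻¹ p))]
    refine Finset.sum_congr rfl fun μ _ => ?_
    rw [evalPerm_rename, ← Pi.single_smul, smul_eq_mul, mul_one]
  calc
    _ = ∑ τ : Equiv.Perm (Fin n), ∑ μ : Equiv.Perm (Fin n),
        evalPerm y p (μ * τ⁻¹) • rename τ (ψ (Pi.single μ 1)) := by
      simp only [hexpand, map_sum, map_smul]
    _ = ∑ μ : Equiv.Perm (Fin n), ∑ κ : Equiv.Perm (Fin n),
        evalPerm y p κ • rename ⇑(κ⁻¹ * μ) (ψ (Pi.single μ 1)) := by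
      rw [Finset.sum_comm]
      refine Finset.sum_congr rfl fun μ _ => ?_
      refine Fintype.sum_equiv ((Equiv.inv _).trans (Equiv.mulLeft μ)) _ _ fun τ => ?_
      simp
    _ = _ := by
      rw [Finset.sum_comm]
      simp only [map_sum, Finset.smul_sum, rename_rename, Equiv.Perm.coe_mul]

/-- The module over the symmetric polynomials spanned by the conjugates of `g`. -/
noncomputable def conjugateSpan (g : MvPolynomial (Fin n) A) :
    Submodule (symmetricSubalgebra (Fin n) A) (MvPolynomial (Fin n) A) :=
  Submodule.span _ (Set.range fun σ : Equiv.Perm (Fin n) => rename σ g)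

theorem rename_mem_conjugateSpan {g p : MvPolynomial (Fin n) A} (hp : p ∈ conjugateSpan g)
    (τ : Equiv.Perm (Fin n)) : rename τ p ∈ conjugateSpan g := by
  induction hp using Submodule.span_induction with
  | mem _ h =>
    obtain ⟨σ, rfl⟩ := h
    exact Submodule.subset_span ⟨τ * σ, by simp [rename_rename]⟩
  | zero => simp
  | add _ _ _ _ h₁ h₂ => simpa using add_mem h₁ h₂
  | smul s _ _ h =>
    rw [Subalgebra.smul_def, smul_eq_mul, map_mul, s.2 τ]
    exact Submodule.smul_mem _ s h

/-- Averaging `p = ψ (evalPerm y p) + (lower degree)` over the conjugates of `ψ` writes `n! • p`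
in terms of the conjugates of one polynomial, up to lower degree. -/
theorem mem_conjugateSpan_of_isHomogeneous (hn : IsUnit (n.factorial : A))
    (hψ : ∀ j, ψ (evalPerm y (staircaseMonomial X j)) = staircaseMonomial X j) {d : ℕ}
    {p : MvPolynomial (Fin n) A} (hp : p.IsHomogeneous d) :
    p ∈ conjugateSpan (∑ μ : Equiv.Perm (Fin n), rename μ (ψ (Pi.single μ 1))) := by
  induction d using Nat.strong_induction_on generalizing p with
  | _ d ih =>
  set N := conjugateSpan (∑ μ : Equiv.Perm (Fin n), rename μ (ψ (Pi.single μ 1)))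
  have hdiff : ∑ τ : Equiv.Perm (Fin n), (rename τ (ψ (evalPerm y (rename ⇑τ⁻¹ p))) - p) ∈ N := by
    refine sum_mem fun τ _ => ?_
    have h := rename_mem_conjugateSpan (apply_evalPerm_sub_mem hψ (fun k hk q hq => ih k hk hq)
      (hp.rename_isHomogeneous (f := ⇑τ⁻¹))) τ
    rwa [map_sub, rename_rename, ← Equiv.Perm.coe_mul, mul_inv_cancel, Equiv.Perm.coe_one,
      rename_id_apply] at h
  rw [Finset.sum_sub_distrib, sum_rename_apply_evalPerm_rename_inv,
    Submodule.sub_mem_iff_right _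
      (sum_mem fun κ _ => N.smul_of_tower_mem _ (Submodule.subset_span ⟨κ⁻¹, rfl⟩)),
    Finset.sum_const, Finset.card_univ, Fintype.card_perm, Fintype.card_fin,
    ← Nat.cast_smul_eq_nsmul A] at hdiff
  exact ((N.restrictScalars A).smul_mem_iff_of_isUnit hn).1 hdiff

theorem exists_conjugateSpan_eq_top (hn : IsUnit (n.factorial : A)) :
    ∃ g : MvPolynomial (Fin n) A, conjugateSpan g = ⊤ := by
  obtain ⟨ψ, hψ⟩ := exists_apply_evalPerm_staircaseMonomial (isUnit_natCast_sub_natCast hn)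
  refine ⟨∑ μ : Equiv.Perm (Fin n), rename μ (ψ (Pi.single μ 1)), eq_top_iff.2 fun p _ => ?_⟩
  rw [← sum_homogeneousComponent p]
  exact sum_mem fun d _ =>
    mem_conjugateSpan_of_isHomogeneous hn hψ (homogeneousComponent_isHomogeneous d p)

end PermEvaluation

section SignSums

variable {B ι : Type*} [CommRing B]

theorem sum_prod_smul_prod_one_add_smul [Fintype ι] [DecidableEq ι] (η : ι → B) (S : Finset ι) :
    ∑ v : ι → ℤˣ, (∏ i ∈ S, (v i : ℤ)) • ∏ i, (1 + (v i : ℤ) • η i) =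
      2 ^ Fintype.card ι * ∏ i ∈ S, η i := by
  calc
    _ = ∑ v : ι → ℤˣ, ∏ i, (if i ∈ S then ((v i : ℤ) : B) else 1) * (1 + (v i : ℤ) • η i) := by
      refine Finset.sum_congr rfl fun v _ => ?_
      rw [Finset.prod_mul_distrib, Finset.prod_ite_mem, Finset.univ_inter, zsmul_eq_mul,
        Int.cast_prod]
    _ = ∏ i, ∑ ε : ℤˣ, (if i ∈ S then ((ε : ℤ) : B) else 1) * (1 + (ε : ℤ) • η i) := by
      rw [Finset.prod_univ_sum, Fintype.piFinset_univ]
    _ = ∏ i, 2 * (if i ∈ S then η i else 1) := by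
      refine Finset.prod_congr rfl fun i _ => ?_
      rw [show (Finset.univ : Finset ℤˣ) = {1, -1} from rfl, Finset.sum_pair (by decide)]
      split_ifs <;> push_cast <;> simp only [one_smul, neg_smul] <;> ring
    _ = _ := by
      rw [Finset.prod_mul_distrib, Finset.prod_ite_mem, Finset.univ_inter, Finset.prod_const,
        Finset.card_univ]

variable {A : Type*} [CommRing A] [Algebra A B]

theorem mul_prod_mem_of_mul_prod_one_add_smul_mem [Fintype ι] (h2 : IsUnit (2 : A))
    {N : Submodule A B} {η : ι → B} {c : B} (h : ∀ v : ι → ℤˣ, c * ∏ i, (1 + (v i : ℤ) • η i) ∈ N)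
    (S : Finset ι) : c * ∏ i ∈ S, η i ∈ N := by
  classical
  rw [← N.smul_mem_iff_of_isUnit (h2.pow (Fintype.card ι)), Algebra.smul_def, map_pow, map_ofNat,
    mul_left_comm, ← sum_prod_smul_prod_one_add_smul, Finset.mul_sum]
  exact sum_mem fun v _ => mul_smul_comm (_ : ℤ) c _ ▸ zsmul_mem (h v) _

theorem aeval_mem_of_aeval_sq_mul_prod_mem [Finite ι] {N : Submodule A B} {η : ι → B}
    (h : ∀ (q : MvPolynomial ι A) (S : Finset ι), aeval (fun i => η i ^ 2) q * ∏ i ∈ S, η i ∈ N)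
    (p : MvPolynomial ι A) : aeval η p ∈ N := by
  have := Fintype.ofFinite ι
  rw [p.as_sum, map_sum]
  refine sum_mem fun m _ => ?_
  convert h (monomial (m.mapRange (· / 2) rfl) (coeff m p))
    (Finset.univ.filter fun i => m i % 2 = 1) using 1
  rw [aeval_monomial, aeval_monomial, Finsupp.prod_fintype _ _ (by simp),
    Finsupp.prod_fintype _ _ (by simp), mul_assoc, Finset.prod_filter, ← Finset.prod_mul_distrib]
  congr 1
  refine Finset.prod_congr rfl fun i _ => ?_
  rw [Finsupp.mapRange_apply, ← pow_mul]
  conv_lhs => rw [← Nat.div_add_mod (m i) 2, pow_add]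
  rcases Nat.mod_two_eq_zero_or_one (m i) with hi | hi <;> simp [hi]

end SignSums

section CyclicGenerator

theorem apply_mem_span_of_mem_span_subalgebra {A R B : Type*} [CommRing A] [CommRing R]
    [CommRing B] [Algebra A R] [Algebra A B] (φ : R →ₐ[A] B) {Λ : Subalgebra A R}
    (hΛ : ∀ s ∈ Λ, φ s ∈ (⊥ : Subalgebra A B)) {T : Set R} {p : R}
    (hp : p ∈ Submodule.span Λ T) : φ p ∈ Submodule.span A (φ '' T) := by
  induction hp using Submodule.span_induction with
  | mem x hx => exact Submodule.subset_span ⟨x, hx, rfl⟩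
  | zero => simp
  | add _ _ _ _ h₁ h₂ => simpa using add_mem h₁ h₂
  | smul s x _ h =>
    obtain ⟨c, hc⟩ := Algebra.mem_bot.1 (hΛ s s.2)
    rw [Subalgebra.smul_def, smul_eq_mul, map_mul, ← hc, ← Algebra.smul_def]
    exact Submodule.smul_mem _ c h

variable {A : Type u} [CommRing A] {n : ℕ}

/-- The `A`-algebra map sending the `i`-th variable to `η i ^ 2`, the `i`-th root of `f` as a
polynomial in `u ^ 2`. -/
noncomputable def ssplitSq (A : Type u) [CommRing A] (n : ℕ) (a : ℕ → A) :
    MvPolynomial (Fin n) A →ₐ[A] SSplit A n a :=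
  aeval fun i => ssplitEta A n a i ^ 2

variable {a : ℕ → A}

theorem ssplitSq_esymm_succ (i : Fin n) :
    ssplitSq A n a (esymm (Fin n) A (i + 1)) =
      algebraMap A (SSplit A n a) ((-1) ^ (i.1 + 1) * a (2 * (i + 1))) := by
  have hmk : ssplitSq A n a (esymm (Fin n) A (i + 1)) =
      Ideal.Quotient.mk (ssplitIdeal A n a) (esymmSq A n (i + 1)) := by
    simp [ssplitSq, esymm, esymmSq, ssplitEta]
  refine hmk.trans (Ideal.Quotient.eq.2 ?_)
  have hsq : ((-1 : MvPolynomial (Fin n) A) ^ (i.1 + 1)) * (-1) ^ (i.1 + 1) = 1 := by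
    rw [← mul_pow, neg_one_mul, neg_neg, one_pow]
  convert (ssplitIdeal A n a).mul_mem_left (-(-1) ^ (i.1 + 1))
    (Ideal.subset_span (Set.mem_range_self i)) using 1
  rw [algebraMap_eq, C_mul, C_pow, C_neg, C_1]
  linear_combination -esymmSq A n (i + 1) * hsq

theorem ssplitSq_mem_bot_of_isSymmetric {s : MvPolynomial (Fin n) A} (hs : s.IsSymmetric) :
    ssplitSq A n a s ∈ (⊥ : Subalgebra A (SSplit A n a)) := by
  obtain ⟨q, hq⟩ := esymmAlgHom_fin_surjective (R := A) le_rfl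
    (⟨s, hs⟩ : symmetricSubalgebra (Fin n) A)
  have hs' : s = aeval (fun i : Fin n => esymm (Fin n) A (i + 1)) q := by
    rw [← esymmAlgHom_apply, hq]
  rw [hs', ← AlgHom.comp_apply, comp_aeval]
  simp only [ssplitSq_esymm_succ]
  exact Algebra.mem_bot.2 ⟨_, (aeval_algebraMap_apply _ _ _).symm⟩

variable {ρ : Hyperoct n →* (SSplit A n a ≃ₐ[A] SSplit A n a)}
  (hρ : ∀ (v : Fin n → ℤˣ) (σ : Equiv.Perm (Fin n)) (i : Fin n),
    ρ ⟨v, σ⟩ (ssplitEta A n a i) = (v (σ i) : ℤ) • ssplitEta A n a (σ i))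

include hρ

theorem hyperoct_apply_ssplitSq (v : Fin n → ℤˣ) (σ : Equiv.Perm (Fin n))
    (p : MvPolynomial (Fin n) A) :
    ρ ⟨v, σ⟩ (ssplitSq A n a p) = ssplitSq A n a (rename σ p) := by
  have h : (ρ ⟨v, σ⟩ : SSplit A n a →ₐ[A] SSplit A n a).comp (ssplitSq A n a) =
      (ssplitSq A n a).comp (rename σ) := by
    refine MvPolynomial.algHom_ext fun i => ?_
    have hsq : ((v (σ i) : ℤ)) ^ 2 = 1 := by
      rw [← Units.val_pow_eq_pow_val, Int.units_sq, Units.val_one]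
    simp [ssplitSq, hρ, smul_pow, hsq, -zsmul_eq_mul]
  exact DFunLike.congr_fun h p

theorem hyperoct_apply_prod_one_add_ssplitEta (v : Fin n → ℤˣ) (σ : Equiv.Perm (Fin n)) :
    ρ ⟨v, σ⟩ (∏ i, (1 + ssplitEta A n a i)) = ∏ i, (1 + (v i : ℤ) • ssplitEta A n a i) := by
  rw [map_prod, ← Equiv.prod_comp σ fun i => 1 + (v i : ℤ) • ssplitEta A n a i]
  simp only [map_add, map_one, hρ]

theorem span_range_hyperoct_apply_eq_top (h2 : IsUnit (2 : A)) {g : MvPolynomial (Fin n) A}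
    (hg : conjugateSpan g = ⊤) :
    Submodule.span A (Set.range fun w =>
      ρ w (ssplitSq A n a g * ∏ i, (1 + ssplitEta A n a i))) = ⊤ := by
  set N := Submodule.span A (Set.range fun w =>
    ρ w (ssplitSq A n a g * ∏ i, (1 + ssplitEta A n a i)))
  have horbit (v : Fin n → ℤˣ) (σ : Equiv.Perm (Fin n)) :
      ssplitSq A n a (rename σ g) * ∏ i, (1 + (v i : ℤ) • ssplitEta A n a i) ∈ N := by
    rw [← hyperoct_apply_ssplitSq hρ v, ← hyperoct_apply_prod_one_add_ssplitEta hρ v σ, ← map_mul]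
    exact Submodule.subset_span ⟨⟨v, σ⟩, rfl⟩
  have hmul (p : MvPolynomial (Fin n) A) (S : Finset (Fin n)) :
      ssplitSq A n a p * ∏ i ∈ S, ssplitEta A n a i ∈ N := by
    have hp := apply_mem_span_of_mem_span_subalgebra (ssplitSq A n a)
      (fun _ => ssplitSq_mem_bot_of_isSymmetric) (hg.symm ▸ Submodule.mem_top (x := p))
    refine (Submodule.span_le (p := N.comap (LinearMap.mulRight A _))).2 ?_ hp
    rintro _ ⟨_, ⟨σ, rfl⟩, rfl⟩
    exact mul_prod_mem_of_mul_prod_one_add_smul_mem h2 (fun v => horbit v σ) S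
  refine eq_top_iff.2 fun z _ => ?_
  obtain ⟨p, rfl⟩ := Ideal.Quotient.mkₐ_surjective A (ssplitIdeal A n a) z
  rw [aeval_unique (Ideal.Quotient.mkₐ A (ssplitIdeal A n a))]
  exact aeval_mem_of_aeval_sq_mul_prod_mem hmul p

end CyclicGenerator

section SquareRoots

theorem exists_monic_coeff_eq {A : Type*} [CommRing A] [Nontrivial A] {n : ℕ} (c : Fin n → A) :
    ∃ f : Polynomial A, f.Monic ∧ f.natDegree = n ∧ ∀ i : Fin n, f.coeff i = c i := by
  classical
  have hlt := Polynomial.ofFn_degree_lt c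
  refine ⟨Polynomial.X ^ n + Polynomial.ofFn n c, Polynomial.monic_X_pow_add hlt, ?_, fun i => ?_⟩
  · apply Polynomial.natDegree_eq_of_degree_eq_some
    rw [Polynomial.degree_add_eq_left_of_degree_lt (by simpa using hlt), Polynomial.degree_X_pow]
  · simp [Polynomial.coeff_X_pow, i.2.ne]

theorem coeff_prod_X_sub_C {D : Type*} [CommRing D] {n : ℕ} (x : Fin n → D) {k : ℕ} (hk : k ≤ n) :
    (∏ i, (Polynomial.X - Polynomial.C (x i))).coeff (n - k) =
      (-1) ^ k * ∑ s ∈ Finset.powersetCard k Finset.univ, ∏ i ∈ s, x i := by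
  have h := Multiset.prod_X_sub_C_coeff ((Finset.univ : Finset (Fin n)).val.map x) (k := n - k)
    (by simp)
  rw [Multiset.map_map, Multiset.card_map, Finset.card_val, Finset.card_univ, Fintype.card_fin,
    Nat.sub_sub_self hk, Finset.esymm_map_val] at h
  exact h

theorem adjoin_range_snoc_eq_top {A R E : Type*} [CommRing A] [CommRing R] [CommRing E]
    [Algebra A R] [Algebra R E] [Algebra A E] [IsScalarTower A R E] {n : ℕ} {r : R} {y : Fin n → E}
    (hr : Algebra.adjoin A {r} = ⊤) (hy : Algebra.adjoin R (Set.range y) = ⊤) :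
    Algebra.adjoin A (Set.range (Fin.snoc (α := fun _ => E) y (algebraMap R E r))) = ⊤ := by
  have h := Algebra.adjoin_algebraMap_image_union_eq_adjoin_adjoin A {r} (Set.range y)
  rw [hr, Algebra.adjoin_top, hy, Subalgebra.restrictScalars_top, Subalgebra.restrictScalars_top,
    Set.image_singleton] at h
  have hinit : Fin.snoc (α := fun _ => E) y (algebraMap R E r) ∘ Fin.castSucc = y := by
    funext i
    simp
  rw [range_eq_singleton_union, Fin.snoc_last, hinit, h]

/-- Adjoining a square root of a root of `f`, i.e. a root of `f (u ^ 2)`, has degree `2 n` when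
`f` has degree `n`; repeating this for the cofactors gives `2 ^ n * n!`. -/
theorem exists_free_algebra_map_eq_prod_X_sub_C_sq {n : ℕ} {A : Type u} [CommRing A]
    [Nontrivial A] {f : Polynomial A} (hf : f.Monic) (hd : f.natDegree = n) :
    ∃ (E : Type u) (_ : CommRing E) (_ : Algebra A E) (y : Fin n → E),
      Module.Finite A E ∧ Module.Free A E ∧ Module.finrank A E = 2 ^ n * n.factorial ∧
      f.map (algebraMap A E) = ∏ i, (Polynomial.X - Polynomial.C (y i ^ 2)) ∧
      Algebra.adjoin A (Set.range y) = ⊤ := by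
  induction n generalizing A with
  | zero =>
    refine ⟨A, inferInstance, inferInstance, Fin.elim0, inferInstance, inferInstance, by simp,
      ?_, Subsingleton.elim _ _⟩
    simp [hf.natDegree_eq_zero.1 hd]
  | succ n ih =>
    set F := Polynomial.expand A 2 f with hF_def
    have hF : F.Monic := hf.expand two_pos
    have hFd : F.natDegree = (n + 1) * 2 := by rw [Polynomial.natDegree_expand, hd]
    have := nontrivial_adjoinRoot hF (by omega)
    have hroot : Polynomial.aeval (AdjoinRoot.root F ^ 2) f = 0 := by
      rw [← Polynomial.expand_aeval, ← hF_def, AdjoinRoot.aeval_eq, AdjoinRoot.mk_self]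
    obtain ⟨g, hg, hgd, hfg⟩ := exists_monic_map_eq_X_sub_C_mul hf hd hroot
    obtain ⟨E, _, _, y, _, _, hrank, hgy, hgen⟩ := ih hg hgd
    let : Algebra A E := Algebra.compHom E (algebraMap A (AdjoinRoot F))
    have : IsScalarTower A (AdjoinRoot F) E := .of_algebraMap_eq fun _ => rfl
    have := hF.free_adjoinRoot
    have := hF.finite_adjoinRoot
    refine ⟨E, inferInstance, inferInstance,
      Fin.snoc (α := fun _ => E) y (algebraMap _ E (AdjoinRoot.root F)),
      .trans (AdjoinRoot F) E, .trans (S := AdjoinRoot F), ?_, ?_, ?_⟩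
    · have hdeg : Module.finrank A (AdjoinRoot F) = (n + 1) * 2 :=
        (finrank_quotient_span_eq_natDegree' hF).trans hFd
      rw [← Module.finrank_mul_finrank A (AdjoinRoot F) E, hdeg, hrank, Nat.factorial_succ]
      ring
    · rw [IsScalarTower.algebraMap_eq A (AdjoinRoot F) E, ← Polynomial.map_map, hfg,
        Polynomial.map_mul, hgy, Fin.prod_univ_castSucc, mul_comm]
      simp
    · exact adjoin_range_snoc_eq_top AdjoinRoot.adjoinRoot_eq_top hgen

end SquareRoots

section RankComparison

theorem exists_algHom_ssplit_surjective {A : Type u} [CommRing A] [Nontrivial A] (n : ℕ)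
    (a : ℕ → A) :
    ∃ (E : Type u) (_ : CommRing E) (_ : Algebra A E) (π : SSplit A n a →ₐ[A] E),
      Module.Finite A E ∧ Module.Free A E ∧ Module.finrank A E = 2 ^ n * n.factorial ∧
      Function.Surjective π := by
  obtain ⟨f, hf, hd, hcoeff⟩ := exists_monic_coeff_eq fun i : Fin n => a (2 * (i.rev + 1))
  obtain ⟨E, _, _, y, hfin, hfree, hrank, hfy, hgen⟩ :=
    exists_free_algebra_map_eq_prod_X_sub_C_sq hf hd
  have hker : ssplitIdeal A n a ≤ RingHom.ker (aeval y : MvPolynomial (Fin n) A →ₐ[A] E) := by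
    refine Ideal.span_le.2 ?_
    rintro _ ⟨i, rfl⟩
    have h := congrArg (Polynomial.coeff · (n - (i + 1))) hfy
    simp only [Polynomial.coeff_map, coeff_prod_X_sub_C _ (Nat.succ_le_of_lt i.2)] at h
    rw [← Fin.val_rev, hcoeff, Fin.rev_rev] at h
    simp [esymmSq, h]
  refine ⟨E, inferInstance, inferInstance, Ideal.Quotient.liftₐ _ (aeval y) hker,
    hfin, hfree, hrank, Ideal.Quotient.lift_surjective_of_surjective _ hker ?_⟩
  exact AlgHom.range_eq_top _ |>.1 (Algebra.adjoin_range_eq_range_aeval A y ▸ hgen)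

/-- The orbit map from the group algebra is onto, and Orzech's theorem makes its composite with
the map to `E` injective. -/
theorem exists_linearEquiv_monoidAlgebra_of_span_orbit_eq_top {A G M E : Type*} [CommRing A]
    [Nontrivial A] [Group G] [Finite G] [AddCommGroup M] [Module A M] [AddCommGroup E] [Module A E]
    [Module.Finite A E] [Module.Free A E] (ρ : Representation A G M) {b : M}
    (hb : Submodule.span A (Set.range fun g => ρ g b) = ⊤) {π : M →ₗ[A] E}
    (hπ : Function.Surjective π) (hE : Nat.card G ≤ Module.finrank A E) :
    ∃ e : MonoidAlgebra A G ≃ₗ[A] M, ∀ g x, e (MonoidAlgebra.single g 1 * x) = ρ g (e x) := by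
  let basis : Module.Basis G A (MonoidAlgebra A G) := .ofRepr (MonoidAlgebra.coeffLinearEquiv A)
  let orbitMap : MonoidAlgebra A G →ₗ[A] M := LinearMap.applyₗ b ∘ₗ ρ.asAlgebraHom.toLinearMap
  have hsurj : Function.Surjective orbitMap := by
    rw [← LinearMap.range_eq_top, eq_top_iff, ← hb, Submodule.span_le]
    rintro _ ⟨g, rfl⟩
    exact ⟨MonoidAlgebra.single g 1, by simp [orbitMap]⟩
  have := Module.Finite.of_basis basis
  have hbij := OrzechProperty.bijective_of_surjective_of_finrank_le (π ∘ₗ orbitMap)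
    (hπ.comp hsurj) (Module.finrank_eq_nat_card_basis basis ▸ hE)
  have hmul (g : G) (x : MonoidAlgebra A G) :
      orbitMap (MonoidAlgebra.single g 1 * x) = ρ g (orbitMap x) := by
    simp [orbitMap]
  exact ⟨.ofBijective orbitMap ⟨.of_comp (f := π) hbij.injective, hsurj⟩, hmul⟩

theorem card_hyperoct (n : ℕ) : Nat.card (Hyperoct n) = 2 ^ n * n.factorial := by
  rw [Nat.card_congr SemidirectProduct.equivProd, Nat.card_eq_fintype_card, Fintype.card_prod,
    Fintype.card_fun, Fintype.card_perm, Fintype.card_fin, Fintype.card_units_int]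

end RankComparison

/-- Suppose `2` and `n!` are invertible in `A`.  For the natural action `ρ` of the hyperoctahedral
group `W_n = S_n ⋉ (ℤ/2)^n` on the signed splitting ring `B = SSplit_A(f)` by `A`-algebra
automorphisms (with `S_n` permuting the `η_i` and the `i`-th `ℤ/2` flipping the sign of `η_i`),
`B` is free of rank one as a module over the group algebra `A[W_n]`; equivalently, there is an
`A`-linear isomorphism `A[W_n] ≃ B` intertwining the actions. -/
theorem ssplit_free_rank_one_over_group_algebra (A : Type*) [CommRing A]
    (n : ℕ) (a : ℕ → A) (ha : a 0 = 1)
    (h2 : IsUnit (2 : A)) (hn : IsUnit (n.factorial : A))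
    (ρ : Hyperoct n →* (SSplit A n a ≃ₐ[A] SSplit A n a))
    (hρ : ∀ (v : Fin n → ℤˣ) (σ : Equiv.Perm (Fin n)) (i : Fin n),
      ρ ⟨v, σ⟩ (ssplitEta A n a i) = (v (σ i) : ℤ) • ssplitEta A n a (σ i)) :
    ∃ e : MonoidAlgebra A (Hyperoct n) ≃ₗ[A] SSplit A n a,
      ∀ (w : Hyperoct n) (x : MonoidAlgebra A (Hyperoct n)),
        e (MonoidAlgebra.single w 1 * x) = ρ w (e x) := by
  rcases subsingleton_or_nontrivial A with hA | hA
  · have := Module.subsingleton A (SSplit A n a)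
    exact ⟨LinearEquiv.ofSubsingleton _ _, fun _ _ => Subsingleton.elim _ _⟩
  obtain ⟨g, hg⟩ := exists_conjugateSpan_eq_top hn
  obtain ⟨E, _, _, π, _, _, hrank, hπ⟩ := exists_algHom_ssplit_surjective n a
  have : Finite (Hyperoct n) := Finite.of_equiv _ SemidirectProduct.equivProd.symm
  let ρ' : Representation A (Hyperoct n) (SSplit A n a) := (AlgEquiv.toLinearMapHom A _).comp ρ
  exact exists_linearEquiv_monoidAlgebra_of_span_orbit_eq_top ρ'
    (span_range_hyperoct_apply_eq_top hρ h2 hg) (π := π.toLinearMap) hπ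
    ((card_hyperoct n).trans hrank.symm).le
end

section
/- The ideal of ℚ[η₁,…,η_n] generated by e_i(η₁²,…,η_n²) for i = 1,…,n−1 together with η₁⋯η_n is a graded complete intersection, and the quotient ring is a finite-dimensional ℚ-vector space of dimension 2^{n−1} · n!. -/
open MvPolynomial

/-- The sequence `e₁(η²),…,e_{n-1}(η²), η₁⋯η_n` in `ℚ[η₁,…,η_n]`. -/
noncomputable def dsplitSeq (n : ℕ) : List (MvPolynomial (Fin n) ℚ) :=
  (List.ofFn fun i : Fin (n - 1) => esymmSq ℚ n (i.1 + 1)) ++ [∏ i : Fin n, X i]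

/-! The coefficients of `∏ᵢ (T - ηᵢᵈ)` are, up to sign, the `eᵢ(ηᵈ)`. Over the polynomial ring on
these coefficients one recovers `A[η₁,…,η_n]` by adjoining one `d`-th root of a root at a time:
splitting off the factor `T - η₁ᵈ` from the generic monic polynomial of degree `n` is free of rank
`n * d`, and the remaining factor is generic of degree `n - 1`. So `A[η]` is free of rank `dⁿ n!`
over the polynomial ring on the `eᵢ(ηᵈ)`, and for `d = 2` base change from the sequence of variables
shows that `e₁(η²),…,e_{n-1}(η²),e_n(η²)` is regular with quotient of dimension `2ⁿ n!`. Since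
`e_n(η²) = (η₁⋯η_n)²`, replacing the last entry by its square root `η₁⋯η_n` keeps the sequence
regular and halves the dimension. -/

/-- The ring homomorphism `f : B →+* C` makes `C` a free `B`-module of rank `d`. It is stated for a
homomorphism rather than an algebra because the maps used here are endomorphisms of a polynomial
ring, whose own algebra structure is a different one. -/
def IsFreeOfRank {B C : Type*} [CommRing B] [CommRing C] (f : B →+* C) (d : ℕ) : Prop :=
  letI := f.toAlgebra
  Nonempty (Module.Basis (Fin d) B C)

namespace IsFreeOfRank

variable {B C D : Type*} [CommRing B] [CommRing C] [CommRing D] {f : B →+* C} {d e : ℕ}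

theorem comp {g : C →+* D} (hg : IsFreeOfRank g e) (hf : IsFreeOfRank f d) :
    IsFreeOfRank (g.comp f) (d * e) := by
  algebraize [f, g, g.comp f]
  obtain ⟨b⟩ := hf
  obtain ⟨c⟩ := hg
  exact ⟨(b.smulTower c).reindex finProdFinEquiv⟩

theorem of_bijective (hf : Function.Bijective f) : IsFreeOfRank f 1 := by
  algebraize [f]
  exact ⟨(Module.Basis.singleton (Fin 1) B).map
    (LinearEquiv.ofBijective (Algebra.linearMap B C) hf)⟩

theorem adjoinRoot {p : Polynomial B} (hp : p.Monic) :
    IsFreeOfRank (AdjoinRoot.of p) p.natDegree := by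
  have algebra_eq : (AdjoinRoot.of p).toAlgebra = (inferInstance : Algebra B (AdjoinRoot p)) :=
    Algebra.algebra_ext _ _ fun _ => rfl
  unfold IsFreeOfRank
  rw [algebra_eq]
  exact ⟨(AdjoinRoot.powerBasis' hp).basis⟩

theorem polynomial_mapRingHom (hf : IsFreeOfRank f d) :
    IsFreeOfRank (Polynomial.mapRingHom f) d := by
  algebraize [f, Polynomial.mapRingHom f]
  obtain ⟨b⟩ := hf
  have isBaseChange := Algebra.IsPushout.out (R := B) (S := Polynomial B) (R' := C)
    (S' := Polynomial C)
  exact ⟨(b.baseChange (Polynomial B)).map isBaseChange.equiv⟩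

open RingTheory.Sequence in
theorem isWeaklyRegular_map (hf : IsFreeOfRank f d) {rs : List B} (hrs : IsWeaklyRegular B rs) :
    IsWeaklyRegular C (rs.map f) := by
  algebraize [f]
  obtain ⟨b⟩ := hf
  have : Module.Free B C := .of_basis b
  exact hrs.of_flat

theorem finrank_quotient_map {K : Type*} [Field K] [Algebra K B] [Algebra K C] {f : B →ₐ[K] C}
    (hf : IsFreeOfRank f.toRingHom d) (I : Ideal B) :
    Module.finrank K (C ⧸ I.map f.toRingHom) = d * Module.finrank K (B ⧸ I) := by
  algebraize [f.toRingHom]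
  have : IsScalarTower K B C := .of_algebraMap_eq fun k => (f.commutes k).symm
  obtain ⟨b⟩ := hf
  let basis := (b.baseChange (B ⧸ I)).map
    (Algebra.TensorProduct.quotIdealMapEquivQuotTensor C I).toLinearEquiv.symm
  have : IsScalarTower K (B ⧸ I) (C ⧸ I.map (algebraMap B C)) :=
    .of_algebraMap_eq fun k => congrArg (Ideal.Quotient.mk _) (f.commutes k).symm
  have := (basis.equivFun.restrictScalars K).finrank_eq
  rw [RingHom.algebraMap_toAlgebra] at this
  simpa [Module.finrank] using this

end IsFreeOfRank

section QuotientDimension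

open scoped Pointwise

variable (K : Type*) {R : Type*} [Field K] [CommRing R] [Algebra K R]

theorem rank_quotient_span_singleton_mul {a : R} (ha : a ∈ nonZeroDivisors R) (b : R) :
    Module.rank K (R ⧸ Ideal.span {a * b}) =
      Module.rank K (R ⧸ Ideal.span {a}) + Module.rank K (R ⧸ Ideal.span {b}) := by
  have smul_span : a • Ideal.span {b} = Ideal.span {a * b} := by
    rw [← Ideal.submodule_span_eq, Submodule.smul_span, Set.smul_set_singleton, smul_eq_mul]
  let mulBy := (Ideal.mulQuot a (Ideal.span {b})).restrictScalars K
  let toQuot := (Ideal.quotOfMul a (Ideal.span {b})).restrictScalars K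
  have exact_pair : Function.Exact mulBy toQuot := Ideal.exact_mulQuot_quotOfMul _
  have injective : Function.Injective mulBy := Ideal.mulQuot_injective _ ha
  have surjective : Function.Surjective toQuot := Ideal.quotOfMul_surjective _
  rw [← smul_span, ← LinearMap.rank_range_add_rank_ker toQuot, LinearMap.range_eq_top.2 surjective,
    rank_top, exact_pair.linearMap_ker_eq, rank_range_of_injective mulBy injective]

theorem finrank_quotient_sup_span_singleton_sq (J : Ideal R) {y : R}
    (hy : IsSMulRegular (R ⧸ J) y) :
    Module.finrank K (R ⧸ J ⊔ Ideal.span {y ^ 2}) =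
      2 * Module.finrank K (R ⧸ J ⊔ Ideal.span {y}) := by
  have hy' : Ideal.Quotient.mk J y ∈ nonZeroDivisors (R ⧸ J) := by
    rw [← isRegular_iff_mem_nonZeroDivisors, ← isLeftRegular_iff_isRegular]
    exact hy
  have finrank_eq (z : R) : Module.finrank K ((R ⧸ J) ⧸ Ideal.span {Ideal.Quotient.mk J z}) =
      Module.finrank K (R ⧸ J ⊔ Ideal.span {z}) := by
    rw [← Set.image_singleton, ← Ideal.map_span]
    exact (DoubleQuot.quotQuotEquivQuotSupₐ K J (Ideal.span {z})).toLinearEquiv.finrank_eq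
  rw [← finrank_eq, ← finrank_eq, sq, map_mul, Module.finrank,
    rank_quotient_span_singleton_mul K hy', ← two_mul, Cardinal.toNat_mul]
  simp [Module.finrank]

end QuotientDimension

section FreeMonic

open Polynomial (freeMonic monic_freeMonic natDegree_freeMonic)

variable {A S : Type*} [CommRing A] [CommRing S] [Algebra A S] {n d : ℕ}

theorem exists_map_freeMonic_eq {p : Polynomial S} (hp : p.Monic) (hdeg : p.natDegree = n) :
    ∃ f : MvPolynomial (Fin n) A →ₐ[A] S, (freeMonic A n).map f.toRingHom = p :=
  ⟨(mapEquivMonic A S n).symm (.mk p hp hdeg),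
    congrArg Subtype.val ((mapEquivMonic A S n).apply_symm_apply (.mk p hp hdeg))⟩

theorem algHom_ext_of_map_freeMonic_eq {f g : MvPolynomial (Fin n) A →ₐ[A] S}
    (h : (freeMonic A n).map f.toRingHom = (freeMonic A n).map g.toRingHom) : f = g :=
  (mapEquivMonic A S n).injective (Subtype.ext h)

theorem apply_X_of_map_freeMonic_eq {f : MvPolynomial (Fin n) A →ₐ[A] S} {p : Polynomial S}
    (hf : (freeMonic A n).map f.toRingHom = p) (i : Fin n) : f (X i) = p.coeff i := by
  simp [← hf, Polynomial.coeff_freeMonic]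

theorem exists_mul_map_freeMonic_eq [Nontrivial S] {p : Polynomial S} (hp : p.Monic)
    (hdeg : p.natDegree = n + 1) {r : S} (hr : p.IsRoot r) :
    ∃ f : MvPolynomial (Fin n) A →ₐ[A] S, (.X - .C r) * (freeMonic A n).map f.toRingHom = p := by
  obtain ⟨c, rfl⟩ := Polynomial.dvd_iff_isRoot.2 hr
  have monic_c : c.Monic := (Polynomial.monic_X_sub_C r).of_mul_monic_left hp
  rw [(Polynomial.monic_X_sub_C r).natDegree_mul monic_c, Polynomial.natDegree_X_sub_C,
    add_comm, add_left_inj] at hdeg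
  obtain ⟨f, hf⟩ := exists_map_freeMonic_eq (A := A) monic_c hdeg
  exact ⟨f, by rw [hf]⟩

variable (A) in
theorem exists_map_freeMonic_eq_prod [Nontrivial S] (x : Fin n → S) :
    ∃ f : MvPolynomial (Fin n) A →ₐ[A] S,
      (freeMonic A n).map f.toRingHom = ∏ i, (.X - .C (x i)) :=
  exists_map_freeMonic_eq (Polynomial.monic_prod_X_sub_C x Finset.univ) <| by
    rw [Polynomial.natDegree_finsetProd_X_sub_C_eq_card, Finset.card_fin]

section AdjoinFactor

variable (A) in
theorem exists_map_freeMonic_eq_mul [Nontrivial A] (n d : ℕ) :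
    ∃ f : MvPolynomial (Fin (n + 1)) A →ₐ[A] Polynomial (MvPolynomial (Fin n) A),
      (freeMonic A (n + 1)).map f.toRingHom =
        (.X - .C (.X ^ d)) * (freeMonic A n).map Polynomial.C := by
  have monic := (monic_freeMonic A n).map Polynomial.C
  refine exists_map_freeMonic_eq ((Polynomial.monic_X_sub_C _).mul monic) ?_
  rw [(Polynomial.monic_X_sub_C _).natDegree_mul monic, Polynomial.natDegree_X_sub_C,
    (monic_freeMonic A n).natDegree_map, natDegree_freeMonic, add_comm]

variable {f : MvPolynomial (Fin (n + 1)) A →ₐ[A] Polynomial (MvPolynomial (Fin n) A)}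
  (hf : (freeMonic A (n + 1)).map f.toRingHom =
    (.X - .C (.X ^ d)) * (freeMonic A n).map Polynomial.C)
include hf

theorem map_comp_freeMonic_eq_mul (g : Polynomial (MvPolynomial (Fin n) A) →ₐ[A] S) :
    (freeMonic A (n + 1)).map (g.comp f).toRingHom =
      (.X - .C (g .X ^ d)) * (freeMonic A n).map (g.comp Polynomial.CAlgHom).toRingHom := by
  calc (freeMonic A (n + 1)).map (g.comp f).toRingHom
      = ((.X - .C (.X ^ d)) * (freeMonic A n).map Polynomial.C).map g.toRingHom := by
        rw [← hf, Polynomial.map_map]; rfl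
    _ = _ := by
        rw [Polynomial.map_mul, Polynomial.map_map]
        congr 1
        simp

theorem algHom_ext_of_comp_eq {g₁ g₂ : Polynomial (MvPolynomial (Fin n) A) →ₐ[A] S}
    (hcomp : g₁.comp f = g₂.comp f) (hX : g₁ .X = g₂ .X) : g₁ = g₂ := by
  refine Polynomial.algHom_ext' (algHom_ext_of_map_freeMonic_eq ?_) hX
  apply (Polynomial.monic_X_sub_C (g₁ .X ^ d)).isRegular.left
  dsimp only
  rw [← map_comp_freeMonic_eq_mul hf, hcomp, hX, ← map_comp_freeMonic_eq_mul hf]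

theorem exists_comp_eq_of_isRoot [Nontrivial S] (h : MvPolynomial (Fin (n + 1)) A →ₐ[A] S) {r : S}
    (hr : ((freeMonic A (n + 1)).map h.toRingHom).IsRoot (r ^ d)) :
    ∃ g : Polynomial (MvPolynomial (Fin n) A) →ₐ[A] S, g.comp f = h ∧ g .X = r := by
  have : Nontrivial A := (algebraMap A S).domain_nontrivial
  have monic := monic_freeMonic A (n + 1)
  obtain ⟨c, hc⟩ := exists_mul_map_freeMonic_eq (A := A) (monic.map h.toRingHom)
    (by rw [monic.natDegree_map, natDegree_freeMonic]) hr
  let g := Polynomial.eval₂AlgHom c r fun _ => .all _ _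
  have g_X : g .X = r := Polynomial.eval₂_X _ _
  have g_C : g.comp Polynomial.CAlgHom = c := AlgHom.ext fun _ => Polynomial.eval₂_C _ _
  refine ⟨g, algHom_ext_of_map_freeMonic_eq ?_, g_X⟩
  rw [map_comp_freeMonic_eq_mul hf, g_X, g_C, hc]

variable [Nontrivial A]

-- An `A[Y₀, …, Yₙ]`-algebra map out of the target of `f` amounts to an element whose `d`-th power
-- is a root of the free monic polynomial, which is the universal property of `AdjoinRoot`.
theorem exists_algEquiv_adjoinRoot_expand_freeMonic :
    ∃ e : AdjoinRoot (Polynomial.expand _ d (freeMonic A (n + 1))) ≃ₐ[A]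
      Polynomial (MvPolynomial (Fin n) A), ∀ x, e (AdjoinRoot.of _ x) = f x := by
  set q := Polynomial.expand _ d (freeMonic A (n + 1))
  have eval_q : q.eval₂ f.toRingHom Polynomial.X = 0 := by
    rw [← Polynomial.eval_map, Polynomial.map_expand, Polynomial.expand_eval, hf]
    simp
  let toPoly : AdjoinRoot q →ₐ[A] Polynomial (MvPolynomial (Fin n) A) :=
    AdjoinRoot.liftAlgHom q f Polynomial.X eval_q
  have toPoly_comp_of : toPoly.comp (AdjoinRoot.ofAlgHom A q) = f :=
    AlgHom.ext (AdjoinRoot.liftAlgHom_of q f Polynomial.X eval_q)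
  have toPoly_root : toPoly (AdjoinRoot.root q) = .X := AdjoinRoot.liftAlgHom_root ..
  have : Nontrivial (AdjoinRoot q) := toPoly.toRingHom.domain_nontrivial
  obtain ⟨ofPoly, ofPoly_f, ofPoly_X⟩ := exists_comp_eq_of_isRoot hf (AdjoinRoot.ofAlgHom A q)
    (r := AdjoinRoot.root q) <| by
      rw [Polynomial.IsRoot, ← Polynomial.expand_eval, ← Polynomial.map_expand,
        Polynomial.eval_map]
      exact AdjoinRoot.eval₂_root q
  refine ⟨.ofAlgHom toPoly ofPoly (algHom_ext_of_comp_eq hf ?_ ?_) (AdjoinRoot.algHom_ext' ?_ ?_),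
    DFunLike.congr_fun toPoly_comp_of⟩
  · rw [AlgHom.comp_assoc, ofPoly_f, toPoly_comp_of, AlgHom.id_comp]
  · simp [ofPoly_X, toPoly_root]
  · exact (congrArg ofPoly.comp toPoly_comp_of).trans ofPoly_f
  · simp [ofPoly_X, toPoly_root]

theorem isFreeOfRank_of_map_freeMonic_eq_mul (hd : 0 < d) :
    IsFreeOfRank f.toRingHom ((n + 1) * d) := by
  obtain ⟨e, he⟩ := exists_algEquiv_adjoinRoot_expand_freeMonic hf
  have f_eq : f.toRingHom = e.toRingEquiv.toRingHom.comp (AdjoinRoot.of _) :=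
    RingHom.ext fun x => (he x).symm
  have free := (IsFreeOfRank.of_bijective (f := e.toRingEquiv.toRingHom) e.bijective).comp
    (IsFreeOfRank.adjoinRoot ((Polynomial.monic_expand_iff hd).2 (monic_freeMonic A (n + 1))))
  rwa [← f_eq, Polynomial.natDegree_expand, natDegree_freeMonic, mul_one] at free

end AdjoinFactor

theorem finSuccEquiv_comp_eq_mapAlgHom_comp
    {f : MvPolynomial (Fin (n + 1)) A →ₐ[A] MvPolynomial (Fin (n + 1)) A}
    {g : MvPolynomial (Fin n) A →ₐ[A] MvPolynomial (Fin n) A}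
    {h : MvPolynomial (Fin (n + 1)) A →ₐ[A] Polynomial (MvPolynomial (Fin n) A)}
    (hf : (freeMonic A (n + 1)).map f.toRingHom = ∏ i, (.X - .C (X i ^ d)))
    (hg : (freeMonic A n).map g.toRingHom = ∏ i, (.X - .C (X i ^ d)))
    (hh : (freeMonic A (n + 1)).map h.toRingHom =
      (.X - .C (.X ^ d)) * (freeMonic A n).map Polynomial.C) :
    (finSuccEquiv A n : _ →ₐ[A] _).comp f = (Polynomial.mapAlgHom g).comp h := by
  have mapAlgHom_comp_C :
      (Polynomial.mapAlgHom g).comp Polynomial.CAlgHom = Polynomial.CAlgHom.comp g := by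
    ext; simp
  apply algHom_ext_of_map_freeMonic_eq
  calc (freeMonic A (n + 1)).map ((finSuccEquiv A n : _ →ₐ[A] _).comp f).toRingHom
      = ((freeMonic A (n + 1)).map f.toRingHom).map (finSuccEquiv A n).toRingHom := by
        rw [Polynomial.map_map]; rfl
    _ = (.X - .C (.X ^ d)) * ((freeMonic A n).map g.toRingHom).map Polynomial.C := by
        rw [hf, hg]
        simp [Polynomial.map_prod, Fin.prod_univ_succ, finSuccEquiv_X_zero, finSuccEquiv_X_succ]
    _ = (freeMonic A (n + 1)).map ((Polynomial.mapAlgHom g).comp h).toRingHom := by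
        rw [map_comp_freeMonic_eq_mul hh, mapAlgHom_comp_C, Polynomial.map_map]
        simp only [map_pow, AlgHom.toRingHom_eq_coe, Polynomial.coe_mapAlgHom, Polynomial.map_X]
        rfl

theorem isFreeOfRank_of_map_freeMonic_eq_prod [Nontrivial A] (hd : 0 < d)
    {f : MvPolynomial (Fin n) A →ₐ[A] MvPolynomial (Fin n) A}
    (hf : (freeMonic A n).map f.toRingHom = ∏ i, (.X - .C (X i ^ d))) :
    IsFreeOfRank f.toRingHom (d ^ n * n.factorial) := by
  induction n with
  | zero =>
    obtain rfl : f = .id A _ := by ext i; exact i.elim0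
    simpa using IsFreeOfRank.of_bijective Function.bijective_id
  | succ n ih =>
    obtain ⟨g, hg⟩ := exists_map_freeMonic_eq_prod A fun i => (X i : MvPolynomial (Fin n) A) ^ d
    obtain ⟨h, hh⟩ := exists_map_freeMonic_eq_mul A n d
    have f_eq : f.toRingHom = (finSuccEquiv A n).symm.toRingEquiv.toRingHom.comp
        ((Polynomial.mapRingHom g.toRingHom).comp h.toRingHom) :=
      RingHom.ext fun p => (finSuccEquiv A n).injective <|
        (DFunLike.congr_fun (finSuccEquiv_comp_eq_mapAlgHom_comp hf hg hh) p).trans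
          ((finSuccEquiv A n).apply_symm_apply _).symm
    have free := (IsFreeOfRank.of_bijective
        (f := (finSuccEquiv A n).symm.toRingEquiv.toRingHom) (AlgEquiv.bijective _)).comp
      ((ih hg).polynomial_mapRingHom.comp (isFreeOfRank_of_map_freeMonic_eq_mul hh hd))
    rw [f_eq]
    convert free using 1
    rw [Nat.factorial_succ]
    ring

end FreeMonic

section Esymm

theorem bijective_aeval_units_smul_X {A σ τ : Type*} [CommRing A] (u : σ → Aˣ) (e : σ ≃ τ) :
    Function.Bijective (aeval (R := A) fun i => u i • (X (e i) : MvPolynomial τ A)) :=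
  (AlgEquiv.ofAlgHom (aeval fun i => u i • X (e i))
    (aeval fun j => (u (e.symm j))⁻¹ • X (e.symm j))
    (by ext; simp [Units.smul_def, smul_smul]) (by ext; simp [Units.smul_def, smul_smul])).bijective

theorem coeff_rev_prod_X_sub_C (A : Type*) {S : Type*} [CommRing A] [CommRing S] [Algebra A S]
    {n : ℕ} (x : Fin n → S) (i : Fin n) :
    (∏ j, (Polynomial.X - Polynomial.C (x j))).coeff i.rev =
      (-1) ^ (i.1 + 1) * aeval x (esymm (Fin n) A (i + 1)) := by
  have card_eq : Multiset.card (Finset.univ.val.map x) = n := by simp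
  have coeff_eq := Multiset.prod_X_sub_C_coeff (Finset.univ.val.map x) (k := i.rev) (by simp)
  have degree_eq : n - (i.rev : ℕ) = i + 1 := by rw [Fin.val_rev]; omega
  rw [card_eq, degree_eq, Multiset.map_map, ← aeval_esymm_eq_multiset_esymm (Fin n) A] at coeff_eq
  exact coeff_eq

theorem isFreeOfRank_aeval_expand_esymm {A : Type*} [CommRing A] [Nontrivial A] {n d : ℕ}
    (hd : 0 < d) :
    IsFreeOfRank (aeval (R := A) fun i : Fin n => expand d (esymm (Fin n) A (i + 1))).toRingHom
      (d ^ n * n.factorial) := by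
  obtain ⟨f, hf⟩ := exists_map_freeMonic_eq_prod A fun i => (X i : MvPolynomial (Fin n) A) ^ d
  let signs := aeval (R := A) fun i : Fin n => ((-1) ^ (i.1 + 1) : Aˣ) •
    (X (Fin.revPerm i) : MvPolynomial (Fin n) A)
  have eq_comp : aeval (fun i : Fin n => expand d (esymm (Fin n) A (i + 1))) = f.comp signs := by
    refine algHom_ext fun i => ?_
    have f_X : f (X i.rev) = (-1) ^ (i.1 + 1) * expand d (esymm (Fin n) A (i + 1)) :=
      (apply_X_of_map_freeMonic_eq hf i.rev).trans (coeff_rev_prod_X_sub_C A _ i)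
    simp [signs, Units.smul_def, f_X, Algebra.smul_def, ← mul_assoc, ← mul_pow]
  have signs_bijective : Function.Bijective signs := bijective_aeval_units_smul_X _ Fin.revPerm
  have free := (isFreeOfRank_of_map_freeMonic_eq_prod hd hf).comp
    (IsFreeOfRank.of_bijective (f := signs.toRingHom) signs_bijective)
  rw [one_mul] at free
  exact eq_comp ▸ free

end Esymm

section Variables

variable {A σ : Type*} [CommRing A]

theorem isSMulRegular_X_quotient_span_X_image {s : Set σ} {i : σ} (hi : i ∉ s) :
    IsSMulRegular (MvPolynomial σ A ⧸ Ideal.span (X (R := A) '' s)) (X (R := A) i) := by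
  rw [isSMulRegular_quotient_iff_mem_of_smul_mem]
  intro p hp
  rw [smul_eq_mul, mem_ideal_span_X_image] at hp
  refine mem_ideal_span_X_image.2 fun m hm => ?_
  obtain ⟨j, hj, hne⟩ := hp (Finsupp.single i 1 + m) <| by
    rwa [mem_support_iff, coeff_X_mul, ← mem_support_iff]
  have : i ≠ j := fun h => hi (h ▸ hj)
  exact ⟨j, hj, by simpa [Finsupp.single_apply, this] using hne⟩

open RingTheory.Sequence in
theorem isWeaklyRegular_map_X {l : List σ} (hl : l.Nodup) :
    IsWeaklyRegular (MvPolynomial σ A) (l.map (X (R := A))) := by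
  refine ⟨fun i hi => ?_⟩
  rw [List.length_map] at hi
  have ofList_take : Ideal.ofList ((l.map (X (R := A))).take i) =
      Ideal.span (X (R := A) '' {j | j ∈ l.take i}) := by
    rw [← List.map_take, Ideal.ofList]
    congr 1
    exact Set.ext fun _ => List.mem_map
  have getElem_notMem : l[i] ∉ l.take i := fun h => by
    obtain ⟨j, hj, hji⟩ := List.mem_take_iff_getElem.1 h
    exact absurd ((hl.getElem_inj_iff).1 hji) (by omega)
  rw [ofList_take, smul_eq_mul, Ideal.mul_top, List.getElem_map]
  exact isSMulRegular_X_quotient_span_X_image getElem_notMem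

theorem ker_aeval_zero_eq_idealOfVars :
    RingHom.ker (aeval (0 : σ → A) : MvPolynomial σ A →ₐ[A] A) = idealOfVars σ A := by
  ext p
  have mem_iff := mem_pow_idealOfVars_iff' 1 p
  simp only [pow_one, Nat.lt_one_iff, Finsupp.degree_eq_zero_iff, forall_eq] at mem_iff
  rw [RingHom.mem_ker, aeval_zero, Algebra.algebraMap_self_apply, constantCoeff_eq, mem_iff]

theorem finrank_quotient_idealOfVars (K σ : Type*) [Field K] :
    Module.finrank K (MvPolynomial σ K ⧸ idealOfVars σ K) = 1 := by
  have surjective : Function.Surjective (aeval (0 : σ → K) : MvPolynomial σ K →ₐ[K] K) :=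
    fun k => ⟨C k, aeval_C _ k⟩
  rw [← ker_aeval_zero_eq_idealOfVars,
    (Ideal.quotientKerAlgEquivOfSurjective surjective).toLinearEquiv.finrank_eq,
    Module.finrank_self]

end Variables

section Homogeneous

variable (A : Type*) [CommRing A]

theorem esymmSq_eq_expand_esymm (n i : ℕ) : esymmSq A n i = expand 2 (esymm (Fin n) A i) := by
  simp [esymmSq, esymm]

theorem esymmSq_self (n : ℕ) : esymmSq A n n = (∏ i, X i) ^ 2 := by
  have powersetCard_eq : Finset.powersetCard n (Finset.univ : Finset (Fin n)) = {Finset.univ} := by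
    rw [← Finset.powersetCard_self, Finset.card_fin]
  rw [esymmSq, powersetCard_eq, Finset.sum_singleton, Finset.prod_pow]

theorem isHomogeneous_esymmSq (n i : ℕ) : (esymmSq A n i).IsHomogeneous (2 * i) := by
  refine IsHomogeneous.sum _ _ _ fun s hs => ?_
  rw [← (Finset.mem_powersetCard.1 hs).2, mul_comm, ← smul_eq_mul, ← Finset.sum_const]
  exact IsHomogeneous.prod s _ _ fun j _ => isHomogeneous_X_pow j 2

theorem isHomogeneous_prod_X (σ : Type*) [Fintype σ] :
    (∏ i : σ, (X i : MvPolynomial σ A)).IsHomogeneous (Fintype.card σ) := by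
  rw [Fintype.card_eq_sum_ones]
  exact IsHomogeneous.prod _ _ _ fun i _ => isHomogeneous_X A i

end Homogeneous

section RegularSequence

open RingTheory.Sequence

variable {R : Type*} [CommRing R]

theorem isWeaklyRegular_append_singleton_pow_iff {rs : List R} {r : R} {k : ℕ} (hk : 0 < k) :
    IsWeaklyRegular R (rs ++ [r ^ k]) ↔ IsWeaklyRegular R (rs ++ [r]) := by
  simp_rw [isWeaklyRegular_append_iff, isWeaklyRegular_singleton_iff, IsSMulRegular.pow_iff hk]

theorem finrank_quotient_ofList_append_singleton_sq (K : Type*) [Field K] [Algebra K R]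
    {rs : List R} {r : R} (h : IsWeaklyRegular R (rs ++ [r])) :
    Module.finrank K (R ⧸ Ideal.ofList (rs ++ [r ^ 2])) =
      2 * Module.finrank K (R ⧸ Ideal.ofList (rs ++ [r])) := by
  rw [isWeaklyRegular_append_iff, isWeaklyRegular_singleton_iff, smul_eq_mul, Ideal.mul_top] at h
  rw [Ideal.ofList_append, Ideal.ofList_append, Ideal.ofList_singleton, Ideal.ofList_singleton]
  exact finrank_quotient_sup_span_singleton_sq K _ h.2

theorem isRegular_of_finrank_quotient_ne_zero (K : Type*) [Field K] [Algebra K R] {rs : List R}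
    (h : IsWeaklyRegular R rs) (hne : Module.finrank K (R ⧸ Ideal.ofList rs) ≠ 0) :
    IsRegular R rs := by
  refine ⟨h, fun htop => hne ?_⟩
  rw [smul_eq_mul, Ideal.mul_top] at htop
  rw [← htop, Module.finrank_zero_of_subsingleton]

end RegularSequence

/-- The sequence `e₁(η²),…,e_{n-1}(η²), η₁⋯η_n` of `dsplitSeq`, over any commutative ring. -/
noncomputable def dsplitSeqOver (A : Type*) [CommRing A] (n : ℕ) : List (MvPolynomial (Fin n) A) :=
  (List.ofFn fun i : Fin (n - 1) => esymmSq A n (i.1 + 1)) ++ [∏ i : Fin n, X i]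

namespace dsplitSeqOver

variable {n : ℕ}

theorem map_map_X_eq_append (A : Type*) [CommRing A] (hn : 1 ≤ n) :
    ((List.finRange n).map (X (R := A))).map
        (aeval (R := A) fun i : Fin n => expand 2 (esymm (Fin n) A (i + 1))).toRingHom =
      (List.ofFn fun i : Fin (n - 1) => esymmSq A n (i.1 + 1)) ++ [(∏ i : Fin n, X i) ^ 2] := by
  obtain ⟨m, rfl⟩ := Nat.exists_eq_add_of_le' hn
  rw [List.map_map, ← List.ofFn_eq_map, List.ofFn_succ', List.concat_eq_append, ← esymmSq_self]
  simp [esymmSq_eq_expand_esymm]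

theorem isWeaklyRegular (A : Type*) [CommRing A] [Nontrivial A] (hn : 1 ≤ n) :
    RingTheory.Sequence.IsWeaklyRegular (MvPolynomial (Fin n) A) (dsplitSeqOver A n) := by
  have regular_sq := (isFreeOfRank_aeval_expand_esymm (A := A) two_pos).isWeaklyRegular_map
    (isWeaklyRegular_map_X (List.nodup_finRange n))
  rw [map_map_X_eq_append A hn] at regular_sq
  exact (isWeaklyRegular_append_singleton_pow_iff two_pos).1 regular_sq

theorem finrank_quotient (K : Type*) [Field K] (hn : 1 ≤ n) :
    Module.finrank K (MvPolynomial (Fin n) K ⧸ Ideal.ofList (dsplitSeqOver K n)) =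
      2 ^ (n - 1) * n.factorial := by
  have ofList_X : Ideal.ofList ((List.finRange n).map (X (R := K))) = idealOfVars (Fin n) K := by
    simp [Ideal.ofList, idealOfVars, Set.range]
  have finrank_sq := (isFreeOfRank_aeval_expand_esymm (A := K) two_pos).finrank_quotient_map
    (Ideal.ofList ((List.finRange n).map X))
  rw [Ideal.map_ofList, map_map_X_eq_append K hn, ofList_X, finrank_quotient_idealOfVars, mul_one,
    finrank_quotient_ofList_append_singleton_sq K (isWeaklyRegular K hn),
    ← mul_pow_sub_one (by omega), mul_assoc] at finrank_sq
  exact Nat.eq_of_mul_eq_mul_left two_pos finrank_sq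

end dsplitSeqOver

theorem dsplit_fiber_complete_intersection_general (K : Type*) [Field K] (n : ℕ) (hn : 1 ≤ n) :
    (∀ i : Fin (n - 1), (esymmSq K n (i.1 + 1)).IsHomogeneous (2 * (i.1 + 1))) ∧
    (∏ i : Fin n, (X i : MvPolynomial (Fin n) K)).IsHomogeneous n ∧
    RingTheory.Sequence.IsRegular (MvPolynomial (Fin n) K) (dsplitSeqOver K n) ∧
    Module.finrank K
      (MvPolynomial (Fin n) K ⧸ Ideal.span {p | p ∈ dsplitSeqOver K n}) =
      2 ^ (n - 1) * n.factorial := by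
  have finrank_eq := dsplitSeqOver.finrank_quotient K hn
  have finrank_ne_zero : 2 ^ (n - 1) * n.factorial ≠ 0 := by positivity
  refine ⟨fun i => isHomogeneous_esymmSq K n _, ?_, ?_, finrank_eq⟩
  · simpa using isHomogeneous_prod_X K (Fin n)
  · exact isRegular_of_finrank_quotient_ne_zero K (dsplitSeqOver.isWeaklyRegular K hn)
      (finrank_eq ▸ finrank_ne_zero)

/-- The ideal of `ℚ[η₁,…,η_n]` generated by `e_i(η₁²,…,η_n²)` for `i = 1,…,n-1` together with
`η₁⋯η_n` is a graded complete intersection (its generators are homogeneous and form a regular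
sequence), and the quotient ring has dimension `2^{n-1}·n!` as a `ℚ`-vector space. -/
theorem dsplit_fiber_complete_intersection (n : ℕ) (hn : 1 ≤ n) :
    (∀ i : Fin (n - 1), (esymmSq ℚ n (i.1 + 1)).IsHomogeneous (2 * (i.1 + 1))) ∧
    (∏ i : Fin n, (X i : MvPolynomial (Fin n) ℚ)).IsHomogeneous n ∧
    RingTheory.Sequence.IsRegular (MvPolynomial (Fin n) ℚ) (dsplitSeq n) ∧
    Module.finrank ℚ
      (MvPolynomial (Fin n) ℚ ⧸ Ideal.span {p | p ∈ dsplitSeq n}) =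
      2 ^ (n - 1) * n.factorial :=
  dsplit_fiber_complete_intersection_general ℚ n hn
end

section
/- Let V be an n-dimensional complex vector space, f : V → V* a skew-symmetric linear map of rank ≤ 2(n−r), and g : V* → V a symmetric linear map of rank ≤ 2r. If 2r > n, then the characteristic polynomial χ(u) of the composition f∘g : V* → V* is divisible by u^{2r−n}, and the quotient χ(u)/u^{2r−n} is a polynomial in u². -/
/-!
Write `A` and `B` for the matrices of `f` and `g` in dual bases. Transposing gives
`(AB)ᵀ = BᵀAᵀ = -BA`, and `BA` has the same characteristic polynomial as `AB`; so the
characteristic polynomial `χ` of `AB` satisfies `χ(-u) = (-1) ^ n χ(u)`, and only powers of `u`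
with the parity of `n` occur in it. The exponent `2r - n` has this parity and is at most the
dimension of the kernel of `f ∘ g`, so `u ^ (2r - n)` divides `χ` and the quotient is even.

In characteristic two the functional equation says nothing about individual coefficients.
There the vanishing is inherited by lifting `A` and `B` to a domain of characteristic zero, which
is possible when `A` has zero diagonal.
-/

open Polynomial

section Polynomial

variable {R : Type*}

theorem coeff_comp_neg_X [Ring R] (p : R[X]) (k : ℕ) :
    (p.comp (-X)).coeff k = (-1) ^ k * p.coeff k := by
  rw [← neg_one_mul (X : R[X]), ← C_1, ← C_neg, comp_C_mul_X_coeff]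
  exact ((Commute.neg_one_right _).pow_right k).eq

variable [CommSemiring R]

theorem expand_two_contract_two {p : R[X]} (hp : ∀ k, Odd k → p.coeff k = 0) :
    expand R 2 (contract 2 p) = p := by
  ext k
  rw [coeff_expand two_pos]
  split_ifs with hk
  · rw [coeff_contract two_ne_zero, Nat.div_mul_cancel hk]
  · exact (hp k (by rwa [← Nat.not_even_iff_odd, even_iff_two_dvd])).symm

theorem exists_eq_X_pow_mul_comp_X_sq {p : R[X]} {m : ℕ} (hdvd : X ^ m ∣ p)
    (hp : ∀ k, Odd (m + k) → p.coeff k = 0) : ∃ q : R[X], p = X ^ m * q.comp (X ^ 2) := by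
  obtain ⟨s, rfl⟩ := hdvd
  have hs : ∀ k, Odd k → s.coeff k = 0 := fun k hk ↦ by
    rw [← coeff_X_pow_mul s m k]
    exact hp _ (by grind)
  exact ⟨contract 2 s, by rw [← expand_eq_comp_X_pow, expand_two_contract_two hs]⟩

end Polynomial

section Matrix

variable {ι R S : Type*}

/-- Alternating matrices, the matrices of alternating bilinear forms. The condition on the diagonal,
which skew-symmetry implies only where `2` is not a zero divisor, makes them liftable along
surjective ring homomorphisms. -/
def IsAlternatingMatrix [Ring R] (A : Matrix ι ι R) : Prop :=
  (∀ i, A i i = 0) ∧ A.transpose = -A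

theorem IsAlternatingMatrix.exists_map_eq [Ring R] [Ring S] {φ : R →+* S}
    (hφ : Function.Surjective φ) {A : Matrix ι ι S} (hA : IsAlternatingMatrix A) :
    ∃ A' : Matrix ι ι R, IsAlternatingMatrix A' ∧ A'.map φ = A := by
  classical
  let _ : LinearOrder ι := linearOrderOfSTO WellOrderingRel
  let lift := Function.surjInv hφ
  have φ_lift : ∀ x, φ (lift x) = x := Function.surjInv_eq hφ
  have hskew : ∀ i j, A j i = -A i j := fun i j ↦ congrFun₂ hA.2 i j
  refine ⟨.of fun i j ↦ if i < j then lift (A i j) else if j < i then -lift (A j i) else 0,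
    ⟨by simp, ?_⟩, ?_⟩
  · ext i j
    rcases lt_trichotomy i j with hij | rfl | hij
    · simp [hij, hij.not_gt]
    · simp
    · simp [hij, hij.not_gt]
  · ext i j
    rcases lt_trichotomy i j with hij | rfl | hij
    · simp [hij, φ_lift]
    · simp [hA.1]
    · simp [hij, hij.not_gt, φ_lift, ← hskew]

variable [Fintype ι] [DecidableEq ι] [CommRing R]

theorem charpoly_comp_neg_X (M : Matrix ι ι R) :
    M.charpoly.comp (-X) = (-1) ^ Fintype.card ι * (-M).charpoly := by
  have hmap : (compRingHom (-X)).mapMatrix M.charmatrix = -(-M).charmatrix := by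
    ext1 i j
    by_cases hij : i = j
    · simp [hij, neg_add_eq_sub]
    · simp [hij]
  rw [Matrix.charpoly, Matrix.charpoly, ← coe_compRingHom_apply, RingHom.map_det, hmap,
    Matrix.det_neg]

theorem charpoly_neg_mul_of_transpose_eq_neg {A B : Matrix ι ι R} (hA : A.transpose = -A)
    (hB : B.IsSymm) : (-(A * B)).charpoly = (A * B).charpoly := by
  rw [← Matrix.charpoly_transpose, Matrix.transpose_neg, Matrix.transpose_mul, hA, hB.eq,
    Matrix.mul_neg, neg_neg, Matrix.charpoly_mul_comm]

theorem coeff_charpoly_mul_eq_zero_of_transpose_eq_neg [IsAddTorsionFree R]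
    {A B : Matrix ι ι R} (hA : A.transpose = -A) (hB : B.IsSymm) {k : ℕ}
    (hk : Odd (Fintype.card ι + k)) : (A * B).charpoly.coeff k = 0 := by
  have hcomp : (A * B).charpoly.comp (-X) = (-1) ^ Fintype.card ι * (A * B).charpoly := by
    rw [charpoly_comp_neg_X, charpoly_neg_mul_of_transpose_eq_neg hA hB]
  have hcoeff := congrArg (coeff · k) hcomp
  simp only [coeff_comp_neg_X, ← C_1, ← C_neg, ← C_pow, coeff_C_mul] at hcoeff
  rcases Nat.even_or_odd k with hk_even | hk_odd
  · have hn : Odd (Fintype.card ι) := by grind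
    simpa [hn.neg_one_pow, hk_even.neg_one_pow, self_eq_neg] using hcoeff
  · have hn : Even (Fintype.card ι) := by grind
    simpa [hn.neg_one_pow, hk_odd.neg_one_pow, neg_eq_self] using hcoeff

theorem IsAlternatingMatrix.coeff_charpoly_mul_eq_zero {A B : Matrix ι ι R}
    (hA : IsAlternatingMatrix A) (hB : B.IsSymm) {k : ℕ} (hk : Odd (Fintype.card ι + k)) :
    (A * B).charpoly.coeff k = 0 := by
  let φ : MvPolynomial R ℤ →+* R := (MvPolynomial.aeval id).toRingHom
  have hφ : Function.Surjective φ := fun x ↦ ⟨MvPolynomial.X x, by simp [φ]⟩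
  obtain ⟨A', hA', rfl⟩ := hA.exists_map_eq hφ
  obtain ⟨B', hB', rfl⟩ : ∃ B' : Matrix ι ι (MvPolynomial R ℤ), B'.IsSymm ∧ B'.map φ = B :=
    ⟨B.map (Function.surjInv hφ), hB.map _, by ext; simp [Function.surjInv_eq]⟩
  rw [← Matrix.map_mul, Matrix.charpoly_map, coeff_map,
    coeff_charpoly_mul_eq_zero_of_transpose_eq_neg hA'.2 hB' hk, map_zero]

end Matrix

section Module

open Module

theorem coeff_charpoly_comp_eq_zero_of_isAlt {R M : Type*} [CommRing R] [AddCommGroup M]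
    [Module R M] [Module.Free R M] [Module.Finite R M] {f : M →ₗ[R] Dual R M} (hf : f.IsAlt)
    {g : Dual R M →ₗ[R] M} (hg : ∀ φ ψ : Dual R M, φ (g ψ) = ψ (g φ)) {k : ℕ}
    (hk : Odd (finrank R M + k)) : (f ∘ₗ g).charpoly.coeff k = 0 := by
  classical
  nontriviality R
  let b := Free.chooseBasis R M
  have hA : IsAlternatingMatrix (LinearMap.toMatrix b b.dualBasis f) := by
    refine ⟨fun i ↦ by simp [LinearMap.toMatrix_apply, hf.self_eq_zero], ?_⟩
    ext i j
    simp [LinearMap.toMatrix_apply, hf.neg]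
  have hB : (LinearMap.toMatrix b.dualBasis b g).IsSymm := by
    ext i j
    simpa [LinearMap.toMatrix_apply] using hg (b.coord j) (b.coord i)
  rw [finrank_eq_card_chooseBasisIndex] at hk
  rw [← LinearMap.charpoly_toMatrix _ b.dualBasis, LinearMap.toMatrix_comp b.dualBasis b]
  exact hA.coeff_charpoly_mul_eq_zero hB hk

variable {K V : Type*} [Field K] [AddCommGroup V] [Module K V] [FiniteDimensional K V]

theorem X_pow_finrank_ker_dvd_charpoly (φ : End K V) :
    X ^ finrank K (LinearMap.ker φ) ∣ φ.charpoly := by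
  have hle := LinearMap.finrank_eigenspace_le φ 0
  rw [End.eigenspace_zero] at hle
  simpa using (pow_dvd_pow (X - C 0) hle).trans (pow_rootMultiplicity_dvd φ.charpoly 0)

theorem charpoly_fg_divisible_general {r : ℕ} (hr : finrank K V ≤ 2 * r) (hrn : r ≤ finrank K V)
    {f : V →ₗ[K] Dual K V} (hf : f.IsAlt)
    (hrkf : finrank K (LinearMap.range f) ≤ 2 * (finrank K V - r))
    {g : Dual K V →ₗ[K] V} (hg : ∀ φ ψ : Dual K V, φ (g ψ) = ψ (g φ)) :
    ∃ q : K[X], (f ∘ₗ g).charpoly = X ^ (2 * r - finrank K V) * q.comp (X ^ 2) := by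
  have hker : 2 * r - finrank K V ≤ finrank K (LinearMap.ker (f ∘ₗ g)) := by
    have hrange := Submodule.finrank_mono (LinearMap.range_comp_le_range g f)
    have hsum := LinearMap.finrank_range_add_finrank_ker (f ∘ₗ g)
    rw [Subspace.dual_finrank_eq] at hsum
    lia
  refine exists_eq_X_pow_mul_comp_X_sq
    ((pow_dvd_pow X hker).trans (X_pow_finrank_ker_dvd_charpoly _)) fun k hk ↦ ?_
  exact coeff_charpoly_comp_eq_zero_of_isAlt hf hg (by grind)

end Module

/-- Let `V` be an `n`-dimensional complex vector space, `f : V → V*` skew-symmetric of rank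
`≤ 2(n-r)`, and `g : V* → V` symmetric of rank `≤ 2r`, and suppose `2r > n`.  Then the
characteristic polynomial of `f ∘ g : V* → V*` is divisible by `u^{2r-n}`, and the quotient is a
polynomial in `u²`. -/
theorem charpoly_fg_divisible (V : Type*) [AddCommGroup V] [Module ℂ V]
    [FiniteDimensional ℂ V] (n r : ℕ) (hdim : Module.finrank ℂ V = n)
    (hr : n < 2 * r) (hrn : r ≤ n)
    (f : V →ₗ[ℂ] Module.Dual ℂ V) (hf : ∀ v w : V, f v w = -(f w v))
    (hrkf : Module.finrank ℂ (LinearMap.range f) ≤ 2 * (n - r))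
    (g : Module.Dual ℂ V →ₗ[ℂ] V) (hg : ∀ φ ψ : Module.Dual ℂ V, φ (g ψ) = ψ (g φ))
    (hrkg : Module.finrank ℂ (LinearMap.range g) ≤ 2 * r) :
    ∃ q : Polynomial ℂ,
      LinearMap.charpoly (f ∘ₗ g) = X ^ (2 * r - n) * q.comp (X ^ 2) := by
  subst hdim
  exact charpoly_fg_divisible_general hr.le hrn (fun v ↦ self_eq_neg.mp (hf v v)) hrkf hg
end
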